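/- The number α₇ = √15 · ln((√15 − 1)/(√15 + 1)) has irrationality measure at most 5.45249; that is, for every real κ > 5.45249, there exist only finitely many pairs (p, q) with p ∈ ℤ and q a positive integer such that |α₇ − p/q| < q^(−κ). -/

import Mathlib

/-!
The coefficient of `√d * log ((√d - 1) / (√d + 1))` in the linear forms is, up to scaling, the
`A`-th finite difference at `0` of `k ↦ 4 ^ C * (C + k - 1 / 2).choose C * d ^ k`. Over `[-1, 1]`,
the integral of `x ^ (2 * k) / (d - x ^ 2)` differs by a rational number from `d ^ k` times that of
`1 / (d - x ^ 2)`, so putting the former in place of `d ^ k` gives the form itself. It equals, up to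
an elementary factor, the integral of `x ^ (2 * C) * (1 - x ^ 2) ^ A / (d - x ^ 2) ^ (C + 1)`, which
is positive and exponentially small.

The coefficients of the forms have the common denominator `lcm (1, …, 2 * A)`. Much of it cancels:
taking differences produces a factor `2 ^ A`, because `d` is odd, and for certain residues of `A`
and `C` modulo an odd prime `p` each product of binomial coefficients in the `A`-th difference is
divisible by `p`. The total contribution of these primes is measured by the prime number theorem,
obtained here from the nonvanishing of `ζ` on the line `Re s = 1` by a Tauberian argument with the
Fejér kernel.

For `d = 15`, `A = 7 * n` and `C = 6 * n` the integer coefficients are at most about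
`exp (43.05 * n)` and the forms at most about `exp (-9.69 * n)`, which bounds the irrationality
measure by about `1 + 43.05 / 9.69 < 5.443`.
-/

open MeasureTheory Filter Topology Set Chebyshev
open scoped fwdDiff

/-! ### The Fejér kernel and a Tauberian theorem -/

lemma one_sub_sq_div_six_le_sinc (x : ℝ) : 1 - x ^ 2 / 6 ≤ Real.sinc x := by
  wlog hx : 0 < x generalizing x
  · rcases eq_or_ne x 0 with rfl | hx0
    · simp
    simpa using this (-x) (by grind)
  rw [Real.sinc_of_ne_zero hx.ne', le_div_iff₀ hx]
  linarith [Real.sin_ge_sub_cube hx.le]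

/-- The Fejér kernel of bandwidth `l`: a nonnegative kernel of total mass `2 * π` whose Fourier
transform is supported in `[-l, l]`. Writing it through `Real.sinc` gives the value `l` at `0`. -/
noncomputable def fejerKernel (l v : ℝ) : ℝ := l * Real.sinc (l * v / 2) ^ 2

section fejerKernel

variable {l : ℝ}

lemma fejerKernel_nonneg (hl : 0 ≤ l) (v : ℝ) : 0 ≤ fejerKernel l v :=
  mul_nonneg hl (sq_nonneg _)

lemma continuous_fejerKernel (l : ℝ) : Continuous (fejerKernel l) := by
  unfold fejerKernel
  exact continuous_const.mul ((Real.continuous_sinc.comp (by fun_prop)).pow 2)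

lemma fejerKernel_eq_sin (hl : l ≠ 0) {v : ℝ} (hv : v ≠ 0) :
    fejerKernel l v = 4 * Real.sin (l * v / 2) ^ 2 / (l * v ^ 2) := by
  rw [fejerKernel, Real.sinc_of_ne_zero (by positivity)]
  field_simp
  ring

lemma fejerKernel_mul_sq_le (hl : 0 < l) (v : ℝ) : fejerKernel l v * v ^ 2 ≤ 4 / l := by
  rcases eq_or_ne v 0 with rfl | hv
  · rw [zero_pow two_ne_zero, mul_zero]
    positivity
  calc fejerKernel l v * v ^ 2 = 4 * Real.sin (l * v / 2) ^ 2 / l := by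
        rw [fejerKernel_eq_sin hl.ne' hv]
        field_simp
    _ ≤ 4 / l := by
        gcongr
        linarith [Real.sin_sq_le_one (l * v / 2)]

lemma fejerKernel_le (hl : 0 ≤ l) (v : ℝ) : fejerKernel l v ≤ l :=
  mul_le_of_le_one_right hl (sq_le_one_iff_abs_le_one _ |>.mpr (Real.abs_sinc_le_one _))

lemma half_le_fejerKernel (hl : 0 < l) {v : ℝ} (hv : |v| ≤ 1 / l) : l / 2 ≤ fejerKernel l v := by
  have hlv : (l * v) ^ 2 ≤ 1 := by
    rw [sq_le_one_iff_abs_le_one, abs_mul, abs_of_pos hl]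
    exact (le_div_iff₀' hl).mp hv
  have hsinc : (23 / 24 : ℝ) ≤ Real.sinc (l * v / 2) := by
    refine le_trans ?_ (one_sub_sq_div_six_le_sinc _)
    rw [div_pow]
    linarith
  have hsq : (1 / 2 : ℝ) ≤ Real.sinc (l * v / 2) ^ 2 := by nlinarith
  unfold fejerKernel
  linarith [mul_le_mul_of_nonneg_left hsq hl.le]

lemma fejerKernel_le_inv_one_add_sq (hl : 0 < l) (v : ℝ) :
    fejerKernel l v ≤ (l + 4 / l) * (1 + v ^ 2)⁻¹ := by
  rw [← div_eq_mul_inv, le_div_iff₀ (by positivity), mul_add, mul_one]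
  exact add_le_add (fejerKernel_le hl.le v) (fejerKernel_mul_sq_le hl v)

lemma integrable_fejerKernel (hl : 0 < l) : Integrable (fejerKernel l) := by
  refine (integrable_inv_one_add_sq.const_mul (l + 4 / l)).mono'
    (continuous_fejerKernel l).aestronglyMeasurable (.of_forall fun v ↦ ?_)
  rw [Real.norm_of_nonneg (fejerKernel_nonneg hl.le v)]
  exact fejerKernel_le_inv_one_add_sq hl v

lemma integral_one_sub_mul_cos (hl : l ≠ 0) (v : ℝ) :
    ∫ y in 0..l, 2 * (1 - y / l) * Real.cos (y * v) = fejerKernel l v := by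
  rcases eq_or_ne v 0 with rfl | hv
  · have hderiv (y : ℝ) : HasDerivAt (fun y ↦ 2 * y - y ^ 2 / l) (2 * (1 - y / l)) y := by
      convert! ((hasDerivAt_id y).const_mul 2).sub (((hasDerivAt_id y).pow 2).div_const l) using 1
      simp
      ring
    simp only [mul_zero, Real.cos_zero, mul_one, fejerKernel, zero_div, Real.sinc_zero, one_pow]
    rw [intervalIntegral.integral_eq_sub_of_hasDerivAt (fun y _ ↦ hderiv y)
      (Continuous.intervalIntegrable (by fun_prop) _ _)]
    field_simp
    ring
  · have hderiv (y : ℝ) : HasDerivAt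
        (fun y ↦ 2 * ((1 - y / l) * (Real.sin (y * v) / v) - Real.cos (y * v) / (l * v ^ 2)))
        (2 * (1 - y / l) * Real.cos (y * v)) y := by
      have hyv : HasDerivAt (fun y ↦ y * v) v y := by simpa using (hasDerivAt_id y).mul_const v
      have hlin : HasDerivAt (fun y ↦ 1 - y / l) (-(1 / l)) y := by
        simpa using ((hasDerivAt_id y).div_const l).const_sub 1
      convert! ((hlin.mul (hyv.sin.div_const v)).sub (hyv.cos.div_const (l * v ^ 2))).const_mul 2
        using 1
      field_simp
      ring
    have hcos : Real.cos (l * v) = 1 - 2 * Real.sin (l * v / 2) ^ 2 := by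
      rw [Real.sin_sq_eq_half_sub]
      ring_nf
    rw [intervalIntegral.integral_eq_sub_of_hasDerivAt (fun y _ ↦ hderiv y)
      (Continuous.intervalIntegrable (by fun_prop) _ _), fejerKernel_eq_sin hl hv, hcos]
    simp only [div_self hl, sub_self, zero_mul, Real.sin_zero, Real.cos_zero, zero_div, mul_zero]
    field_simp
    ring

lemma fejerKernel_eq_integral_exp (hl : 0 < l) (v : ℝ) :
    (fejerKernel l v : ℂ) =
      ∫ y in -l..l, ((1 - |y| / l : ℝ) : ℂ) * Complex.exp (-(y * v * Complex.I)) := by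
  have hint (a b : ℝ) : IntervalIntegrable
      (fun y : ℝ ↦ ((1 - |y| / l : ℝ) : ℂ) * Complex.exp (-(y * v * Complex.I))) volume a b :=
    Continuous.intervalIntegrable (by fun_prop) _ _
  have hneg := intervalIntegral.integral_comp_neg (a := 0) (b := l)
    fun y : ℝ ↦ ((1 - |y| / l : ℝ) : ℂ) * Complex.exp (-(y * v * Complex.I))
  rw [neg_zero] at hneg
  rw [← intervalIntegral.integral_add_adjacent_intervals (hint (-l) 0) (hint 0 l), ← hneg,
    ← intervalIntegral.integral_add (Continuous.intervalIntegrable (by fun_prop) _ _) (hint 0 l),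
    ← integral_one_sub_mul_cos hl.ne', ← intervalIntegral.integral_ofReal]
  refine intervalIntegral.integral_congr fun y hy ↦ ?_
  rw [uIcc_of_le hl.le] at hy
  simp only [abs_neg, abs_of_nonneg hy.1]
  push_cast
  rw [Complex.cos]
  ring_nf

end fejerKernel

/-- The function whose Fourier transform is carried by `[a, b]`, with density `φ` there. -/
noncomputable def bandlimited (φ : ℝ → ℂ) (a b v : ℝ) : ℂ :=
  ∫ y in a..b, φ y * Complex.exp (-(y * v * Complex.I))

lemma tendsto_setIntegral_mul_exp_atTop (G : ℝ → ℂ) {s : Set ℝ} (hs : MeasurableSet s) :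
    Tendsto (fun u : ℝ ↦ ∫ y in s, G y * Complex.exp (y * u * Complex.I)) atTop (𝓝 0) := by
  have hscale : Tendsto (fun u : ℝ ↦ -u / (2 * Real.pi)) atTop (cocompact ℝ) := by
    rw [cocompact_eq_atBot_atTop]
    exact (tendsto_neg_atTop_atBot.atBot_div_const (by positivity)).mono_right le_sup_left
  refine ((Real.tendsto_integral_exp_smul_cocompact (s.indicator G)).comp hscale).congr fun u ↦ ?_
  rw [Function.comp_apply, ← integral_indicator hs]
  congr with y
  by_cases hy : y ∈ s
  · rw [indicator_of_mem hy, indicator_of_mem hy, Circle.smul_def, Real.fourierChar_apply,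
      smul_eq_mul, mul_comm]
    congr 2
    push_cast
    field_simp
  · rw [indicator_of_notMem hy, indicator_of_notMem hy, smul_zero]

lemma tendsto_integral_exp_neg_mul_nhdsGT_zero {h : ℝ → ℂ} (hh : IntegrableOn h (Ioi 0)) :
    Tendsto (fun σ : ℝ ↦ ∫ v in Ioi (0 : ℝ), Complex.exp (-(σ * v)) * h v) (𝓝[>] 0)
      (𝓝 (∫ v in Ioi (0 : ℝ), h v)) := by
  refine tendsto_integral_filter_of_dominated_convergence _
    (.of_forall fun σ ↦ (Measurable.aestronglyMeasurable (by fun_prop)).mul hh.aestronglyMeasurable)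
    ?_ hh.norm (.of_forall fun v ↦ ?_)
  · filter_upwards [self_mem_nhdsWithin] with σ hσ
    refine (ae_restrict_iff' measurableSet_Ioi).mpr (.of_forall fun v hv ↦ ?_)
    rw [norm_mul, Complex.norm_exp]
    refine mul_le_of_le_one_left (norm_nonneg _) (Real.exp_le_one_iff.mpr ?_)
    simpa using (mul_pos (mem_Ioi.mp hσ) (mem_Ioi.mp hv)).le
  · have hcont : Continuous fun σ : ℝ ↦ Complex.exp (-(σ * v)) * h v := by fun_prop
    simpa using (hcont.tendsto 0).mono_left nhdsWithin_le_nhds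

lemma tendsto_integral_mul_boundary {g : ℂ → ℂ} (hg : ContinuousOn g {s | 0 ≤ s.re})
    {χ : ℝ → ℂ} (hχ : Continuous χ) (a b : ℝ) :
    Tendsto (fun σ : ℝ ↦ ∫ y in a..b, χ y * g (σ + y * Complex.I)) (𝓝[>] 0)
      (𝓝 (∫ y in a..b, χ y * g (y * Complex.I))) := by
  have hcont : Continuous (Function.uncurry fun σ y : ℝ ↦
      χ y * g ((max σ 0 : ℝ) + y * Complex.I)) := by
    refine (hχ.comp continuous_snd).mul (hg.comp_continuous (by fun_prop) fun p ↦ ?_)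
    simp
  have htendsto := (intervalIntegral.continuous_parametric_intervalIntegral_of_continuous'
    (μ := volume) hcont a b).tendsto 0
  simp only [max_self, Complex.ofReal_zero, zero_add] at htendsto
  refine (htendsto.mono_left nhdsWithin_le_nhds).congr' ?_
  filter_upwards [self_mem_nhdsWithin] with σ hσ
  simp only [max_eq_left (mem_Ioi.mp hσ).le]

section LaplaceTransform

variable {f : ℝ → ℂ} {M : ℝ} {g : ℂ → ℂ} {φ : ℝ → ℂ}

lemma integral_exp_neg_mul_bandlimited (hf : Measurable f) (hM : ∀ v, ‖f v‖ ≤ M)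
    (hlap : ∀ s : ℂ, 0 < s.re → ∫ v in Ioi (0 : ℝ), f v * Complex.exp (-(s * v)) = g s)
    (hφ : Continuous φ) (a b u : ℝ) {σ : ℝ} (hσ : 0 < σ) :
    ∫ v in Ioi (0 : ℝ), Complex.exp (-(σ * v)) * (f v * bandlimited φ a b (v - u)) =
      ∫ y in a..b, φ y * Complex.exp (y * u * Complex.I) * g (σ + y * Complex.I) := by
  have hdecay : IntegrableOn (fun v : ℝ ↦ f v * Complex.exp (-(σ * v))) (Ioi 0) := by
    refine Integrable.bdd_mul (c := M) ?_ hf.aestronglyMeasurable (.of_forall hM)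
    simpa [IntegrableOn] using integrableOn_exp_mul_complex_Ioi (a := -σ) (by simpa) 0
  have hprod : Integrable (Function.uncurry fun y v : ℝ ↦
      Complex.exp (-(y * (v - u : ℝ) * Complex.I)) * (φ y * (f v * Complex.exp (-(σ * v)))))
      ((volume.restrict (uIoc a b)).prod (volume.restrict (Ioi 0))) := by
    refine (hφ.integrableOn_uIoc.mul_prod hdecay).bdd_mul (c := 1)
      (Measurable.aestronglyMeasurable (by fun_prop)) (.of_forall fun p ↦ ?_)
    rw [Complex.norm_exp]
    simp
  have hswap := intervalIntegral_integral_swap hprod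
  have hinner (y : ℝ) : ∫ v in Ioi (0 : ℝ),
      Complex.exp (-(y * (v - u : ℝ) * Complex.I)) * (φ y * (f v * Complex.exp (-(σ * v)))) =
      φ y * Complex.exp (y * u * Complex.I) * g (σ + y * Complex.I) := by
    rw [← hlap _ (by simpa), ← integral_const_mul]
    congr with v
    have hexp : Complex.exp (-(y * (v - u : ℝ) * Complex.I)) * Complex.exp (-(σ * v)) =
        Complex.exp (y * u * Complex.I) * Complex.exp (-((σ + y * Complex.I) * v)) := by
      rw [← Complex.exp_add, ← Complex.exp_add]
      push_cast
      ring_nf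
    linear_combination φ y * f v * hexp
  simp_rw [hinner] at hswap
  rw [hswap]
  congr with v
  rw [bandlimited, ← intervalIntegral.integral_const_mul, ← intervalIntegral.integral_const_mul]
  congr with y
  ring

lemma integral_mul_bandlimited (hf : Measurable f) (hM : ∀ v, ‖f v‖ ≤ M)
    (hlap : ∀ s : ℂ, 0 < s.re → ∫ v in Ioi (0 : ℝ), f v * Complex.exp (-(s * v)) = g s)
    (hg : ContinuousOn g {s | 0 ≤ s.re}) (hφ : Continuous φ) {a b : ℝ}
    (hK : Integrable (bandlimited φ a b)) (u : ℝ) :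
    ∫ v in Ioi (0 : ℝ), f v * bandlimited φ a b (v - u) =
      ∫ y in a..b, φ y * Complex.exp (y * u * Complex.I) * g (y * Complex.I) := by
  have hint : IntegrableOn (fun v ↦ f v * bandlimited φ a b (v - u)) (Ioi 0) :=
    ((hK.comp_sub_right u).bdd_mul hf.aestronglyMeasurable (.of_forall hM)).integrableOn
  refine tendsto_nhds_unique (tendsto_integral_exp_neg_mul_nhdsGT_zero hint)
    ((tendsto_integral_mul_boundary hg (by fun_prop) a b).congr' ?_)
  filter_upwards [self_mem_nhdsWithin] with σ hσ
  exact (integral_exp_neg_mul_bandlimited hf hM hlap hφ a b u hσ).symm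

lemma tendsto_integral_mul_bandlimited_zero (hf : Measurable f) (hM : ∀ v, ‖f v‖ ≤ M)
    (hlap : ∀ s : ℂ, 0 < s.re → ∫ v in Ioi (0 : ℝ), f v * Complex.exp (-(s * v)) = g s)
    (hg : ContinuousOn g {s | 0 ≤ s.re}) (hφ : Continuous φ) {a b : ℝ} (hab : a ≤ b)
    (hK : Integrable (bandlimited φ a b)) :
    Tendsto (fun u ↦ ∫ v in Ioi (0 : ℝ), f v * bandlimited φ a b (v - u)) atTop (𝓝 0) := by
  refine (tendsto_setIntegral_mul_exp_atTop (fun y ↦ φ y * g (y * Complex.I))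
    (measurableSet_Ioc (a := a) (b := b))).congr fun u ↦ ?_
  rw [integral_mul_bandlimited hf hM hlap hg hφ hK, intervalIntegral.integral_of_le hab]
  congr with y
  ring

end LaplaceTransform

lemma integral_univ_inv_sq_add_sq {η : ℝ} (hη : 0 < η) :
    ∫ v : ℝ, (v ^ 2 + η ^ 2)⁻¹ = Real.pi / η := by
  have hscale := Measure.integral_comp_div (fun x : ℝ ↦ (1 + x ^ 2)⁻¹) η
  rw [integral_univ_inv_one_add_sq, smul_eq_mul, abs_of_pos hη] at hscale
  calc ∫ v : ℝ, (v ^ 2 + η ^ 2)⁻¹ = ∫ v : ℝ, (η ^ 2)⁻¹ * (1 + (v / η) ^ 2)⁻¹ := by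
        congr with v
        field_simp
        ring
    _ = Real.pi / η := by
        rw [integral_const_mul, hscale]
        field_simp

lemma integrable_inv_sq_add_sq {η : ℝ} (hη : 0 < η) :
    Integrable fun v : ℝ ↦ (v ^ 2 + η ^ 2)⁻¹ := by
  by_contra hnot
  have hpos : 0 < Real.pi / η := by positivity
  rw [← integral_univ_inv_sq_add_sq hη, integral_undef hnot] at hpos
  exact hpos.false

section Tauberian

variable {f : ℝ → ℝ} {M δ η l u : ℝ}

lemma indicator_sub_le_mul_fejerKernel (hM : ∀ v, |f v| ≤ M) (hδ : 0 ≤ δ)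
    (hη : 0 < η) (hl : 0 < l) (hlη : 1 / l ≤ η) (hfu : ∀ v, |v - u| ≤ η → δ ≤ f v) (v : ℝ) :
    (Icc (u - 1 / l) (u + 1 / l)).indicator (fun _ ↦ l * δ / 2) v -
        8 * M / l * ((v - u) ^ 2 + η ^ 2)⁻¹ ≤ f v * fejerKernel l (v - u) := by
  have hM0 : 0 ≤ M := (abs_nonneg _).trans (hM v)
  have hK := fejerKernel_nonneg hl.le (v - u)
  have htail : 0 ≤ 8 * M / l * ((v - u) ^ 2 + η ^ 2)⁻¹ := by positivity
  have hmem : v ∈ Icc (u - 1 / l) (u + 1 / l) ↔ |v - u| ≤ 1 / l := by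
    rw [abs_le, mem_Icc]
    grind
  by_cases hnear : |v - u| ≤ 1 / l
  · rw [indicator_of_mem (hmem.mpr hnear)]
    nlinarith [half_le_fejerKernel hl hnear, hfu v (hnear.trans hlη)]
  rw [indicator_of_notMem (mt hmem.mp hnear), zero_sub]
  by_cases hmid : |v - u| ≤ η
  · linarith [mul_nonneg (hδ.trans (hfu v hmid)) hK]
  have hfar : η ^ 2 ≤ (v - u) ^ 2 := by
    rw [← sq_abs (v - u)]
    gcongr
    exact (not_le.mp hmid).le
  have hdecay : fejerKernel l (v - u) ≤ 8 / l * ((v - u) ^ 2 + η ^ 2)⁻¹ := by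
    rw [← div_eq_mul_inv, le_div_iff₀ (by positivity)]
    have hsq := fejerKernel_mul_sq_le hl (v - u)
    have h8 : 8 / l = 4 / l + 4 / l := by ring
    nlinarith
  calc -(8 * M / l * ((v - u) ^ 2 + η ^ 2)⁻¹) = -M * (8 / l * ((v - u) ^ 2 + η ^ 2)⁻¹) := by ring
    _ ≤ -M * fejerKernel l (v - u) :=
        mul_le_mul_of_nonpos_left hdecay (neg_nonpos.mpr hM0)
    _ ≤ f v * fejerKernel l (v - u) :=
        mul_le_mul_of_nonneg_right (neg_le_of_abs_le (hM v)) hK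

lemma le_setIntegral_mul_fejerKernel (hf : Measurable f) (hM : ∀ v, |f v| ≤ M) (hδ : 0 ≤ δ)
    (hη : 0 < η) (hl : 0 < l) (hlη : 1 / l ≤ η) (hu : η < u)
    (hfu : ∀ v, |v - u| ≤ η → δ ≤ f v) :
    δ - 8 * M * Real.pi / (l * η) ≤ ∫ v in Ioi (0 : ℝ), f v * fejerKernel l (v - u) := by
  have hl' : 0 < 1 / l := by positivity
  have hM0 : 0 ≤ M := (abs_nonneg _).trans (hM 0)
  have hind : Integrable ((Icc (u - 1 / l) (u + 1 / l)).indicator fun _ ↦ l * δ / 2) :=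
    (integrable_indicator_iff measurableSet_Icc).mpr continuous_const.integrableOn_Icc
  have htail : Integrable fun v ↦ 8 * M / l * ((v - u) ^ 2 + η ^ 2)⁻¹ :=
    ((integrable_inv_sq_add_sq hη).comp_sub_right u).const_mul _
  have hfK : Integrable fun v ↦ f v * fejerKernel l (v - u) :=
    ((integrable_fejerKernel hl).comp_sub_right u).bdd_mul hf.aestronglyMeasurable (.of_forall hM)
  have hindInt : ∫ v in Ioi (0 : ℝ),
      (Icc (u - 1 / l) (u + 1 / l)).indicator (fun _ ↦ l * δ / 2) v = δ := by
    rw [setIntegral_indicator measurableSet_Icc, inter_eq_right.mpr, setIntegral_const,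
      measureReal_def, Real.volume_Icc, ENNReal.toReal_ofReal (by linarith), smul_eq_mul]
    · field_simp
      ring
    · exact fun v hv ↦ mem_Ioi.mpr (by linarith [hv.1])
  have htailInt : ∫ v in Ioi (0 : ℝ), 8 * M / l * ((v - u) ^ 2 + η ^ 2)⁻¹ ≤
      8 * M * Real.pi / (l * η) := by
    calc _ ≤ ∫ v, 8 * M / l * ((v - u) ^ 2 + η ^ 2)⁻¹ :=
          setIntegral_le_integral htail (.of_forall fun v ↦ by positivity)
      _ = 8 * M / l * (Real.pi / η) := by
          rw [integral_const_mul, integral_sub_right_eq_self (fun v ↦ (v ^ 2 + η ^ 2)⁻¹) u,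
            integral_univ_inv_sq_add_sq hη]
      _ = 8 * M * Real.pi / (l * η) := div_mul_div_comm ..
  calc δ - 8 * M * Real.pi / (l * η)
      ≤ ∫ v in Ioi (0 : ℝ), ((Icc (u - 1 / l) (u + 1 / l)).indicator (fun _ ↦ l * δ / 2) v -
          8 * M / l * ((v - u) ^ 2 + η ^ 2)⁻¹) := by
        rw [integral_sub hind.integrableOn htail.integrableOn, hindInt]
        linarith
    _ ≤ ∫ v in Ioi (0 : ℝ), f v * fejerKernel l (v - u) :=
        integral_mono (hind.sub htail).integrableOn hfK.integrableOn fun v ↦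
          indicator_sub_le_mul_fejerKernel hM hδ hη hl hlη hfu v

lemma eventually_exists_lt_of_tendsto_fejer (hf : Measurable f) (hM : ∀ v, |f v| ≤ M)
    (hfejer : ∀ l > 0,
      Tendsto (fun u ↦ ∫ v in Ioi (0 : ℝ), f v * fejerKernel l (v - u)) atTop (𝓝 0))
    (hδ : 0 < δ) (hη : 0 < η) : ∀ᶠ u in atTop, ∃ v, |v - u| ≤ η ∧ f v < δ := by
  obtain ⟨l, hl, hlη, hltail⟩ : ∃ l > 0, 1 / l ≤ η ∧ 8 * M * Real.pi / (l * η) ≤ δ / 2 := by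
    refine ⟨max (1 / η) (16 * M * Real.pi / (δ * η)), lt_max_of_lt_left (by positivity),
      (one_div_le (lt_max_of_lt_left (by positivity)) hη).mpr (le_max_left _ _), ?_⟩
    have hle : 16 * M * Real.pi / (δ * η) ≤ max (1 / η) (16 * M * Real.pi / (δ * η)) :=
      le_max_right _ _
    have hpos : 0 < max (1 / η) (16 * M * Real.pi / (δ * η)) :=
      lt_max_of_lt_left (by positivity)
    rw [div_le_iff₀ (by positivity)] at hle ⊢
    linarith
  filter_upwards [(hfejer l hl).eventually_lt_const (half_pos hδ), eventually_gt_atTop η]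
    with u hsmall hu
  by_contra! hlarge
  linarith [le_setIntegral_mul_fejerKernel hf hM hδ.le hη hl hlη hu hlarge]

/-- Schmidt's one-sided Tauberian condition, in additive form: `f` drops by an arbitrarily small
amount over windows of a suitable fixed length, far out. -/
def SlowlyDecreasing (f : ℝ → ℝ) : Prop :=
  ∀ ε > 0, ∃ η > 0, ∀ᶠ u in atTop, ∀ v ∈ Icc u (u + η), f u - ε ≤ f v

lemma SlowlyDecreasing.tendsto_zero_of_fejer (hslow : SlowlyDecreasing f) (hf : Measurable f)
    (hM : ∀ v, |f v| ≤ M) (hfejer : ∀ l > 0,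
      Tendsto (fun u ↦ ∫ v in Ioi (0 : ℝ), f v * fejerKernel l (v - u)) atTop (𝓝 0)) :
    Tendsto f atTop (𝓝 0) := by
  have hfejer_neg (l : ℝ) (hl : l > 0) :
      Tendsto (fun u ↦ ∫ v in Ioi (0 : ℝ), -f v * fejerKernel l (v - u)) atTop (𝓝 0) := by
    simpa [integral_neg] using (hfejer l hl).neg
  rw [Metric.tendsto_atTop']
  intro ε hε
  obtain ⟨η, hη, hdrop⟩ := hslow (ε / 2) (half_pos hε)
  obtain ⟨a, ha⟩ := eventually_atTop.mp hdrop
  obtain ⟨b, hb⟩ := eventually_atTop.mp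
    (eventually_exists_lt_of_tendsto_fejer hf hM hfejer (half_pos hε) (half_pos hη))
  obtain ⟨c, hc⟩ := eventually_atTop.mp (eventually_exists_lt_of_tendsto_fejer hf.neg
    (fun v ↦ (abs_neg (f v)).trans_le (hM v)) hfejer_neg (half_pos hε) (half_pos hη))
  refine ⟨max (a + η) (max b (c + η)), fun u hu ↦ ?_⟩
  simp only [gt_iff_lt, max_lt_iff] at hu
  rw [Real.dist_eq, sub_zero, abs_lt]
  constructor
  · obtain ⟨v, hv, hfv⟩ := hc (u - η / 2) (by linarith)
    rw [abs_le] at hv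
    rw [Pi.neg_apply] at hfv
    linarith [ha v (by linarith) u ⟨by linarith, by linarith⟩]
  · obtain ⟨v, hv, hfv⟩ := hb (u + η / 2) (by linarith)
    rw [abs_le] at hv
    linarith [ha u (by linarith) v ⟨by linarith, by linarith⟩]

theorem SlowlyDecreasing.tendsto_zero_of_laplace (hslow : SlowlyDecreasing f) (hf : Measurable f)
    (hM : ∀ v, |f v| ≤ M) {g : ℂ → ℂ} (hg : ContinuousOn g {s | 0 ≤ s.re})
    (hlap : ∀ s : ℂ, 0 < s.re → ∫ v in Ioi (0 : ℝ), (f v : ℂ) * Complex.exp (-(s * v)) = g s) :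
    Tendsto f atTop (𝓝 0) := by
  refine hslow.tendsto_zero_of_fejer hf hM fun l hl ↦ ?_
  have hband : bandlimited (fun y ↦ ((1 - |y| / l : ℝ) : ℂ)) (-l) l = fun v ↦
      (fejerKernel l v : ℂ) :=
    funext fun v ↦ (fejerKernel_eq_integral_exp hl v).symm
  have hlim := tendsto_integral_mul_bandlimited_zero
    (Complex.measurable_ofReal.comp hf) (fun v ↦ (Complex.norm_real (f v)).trans_le (hM v)) hlap hg
    (φ := fun y ↦ ((1 - |y| / l : ℝ) : ℂ)) (by fun_prop) (neg_le_self hl.le)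
    (hband ▸ (integrable_fejerKernel hl).ofReal)
  simp only [hband, Function.comp_apply] at hlim
  refine tendsto_ofReal_iff.mp (hlim.congr fun u ↦ ?_)
  rw [← integral_complex_ofReal]
  simp only [Complex.ofReal_mul]

end Tauberian

/-! ### The prime number theorem -/

lemma psi_le_six_mul {x : ℝ} (hx : 0 ≤ x) : ψ x ≤ 6 * x := by
  have hlog : Real.log 4 = 2 * Real.log 2 := by
    rw [show (4 : ℝ) = 2 ^ 2 by norm_num, Real.log_pow, Nat.cast_ofNat]
  refine (Chebyshev.psi_le_const_mul_self hx).trans (mul_le_mul_of_nonneg_right ?_ hx)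
  linarith [Real.log_two_lt_d9]

lemma exists_continuousOn_LSeries_vonMangoldt_eq :
    ∃ G : ℂ → ℂ, ContinuousOn G {s | 1 ≤ s.re} ∧ ∀ s : ℂ, 1 < s.re →
      LSeries (fun n ↦ (ArithmeticFunction.vonMangoldt n : ℂ)) s = G s + 1 / (s - 1) := by
  refine ⟨ArithmeticFunction.vonMangoldt.LFunctionResidueClassAux (q := 1) 1,
    ArithmeticFunction.vonMangoldt.continuousOn_LFunctionResidueClassAux 1, fun s hs ↦ ?_⟩
  have hall : ArithmeticFunction.vonMangoldt.residueClass (1 : ZMod 1) =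
      fun n ↦ ArithmeticFunction.vonMangoldt n :=
    funext fun n ↦ indicator_of_mem (s := {n : ℕ | (n : ZMod 1) = 1}) (Subsingleton.elim _ _) _
  have hEq := ArithmeticFunction.vonMangoldt.eqOn_LFunctionResidueClassAux (q := 1) (a := 1)
    isUnit_one hs
  simp only [hall, Nat.totient_one, Nat.cast_one, inv_one] at hEq
  rw [hEq, sub_add_cancel]

section MellinTransform

variable {s : ℂ}

lemma integrableOn_psi_mul_cpow (hs : 1 < s.re) :
    IntegrableOn (fun t : ℝ ↦ (ψ t : ℂ) * (t : ℂ) ^ (-(s + 1))) (Ioi 1) := by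
  have hcpow : ContinuousOn (fun t : ℝ ↦ (t : ℂ) ^ (-(s + 1))) (Ioi 1) := fun t ht ↦
    (Complex.continuousAt_ofReal_cpow_const _ _
      (.inr (zero_lt_one.trans (mem_Ioi.mp ht)).ne')).continuousWithinAt
  refine ((integrableOn_Ioi_rpow_of_lt (neg_lt_neg hs) one_pos).const_mul 6).mono'
    ((Complex.measurable_ofReal.comp Chebyshev.psi_mono.measurable).aestronglyMeasurable.mul
      (hcpow.aestronglyMeasurable measurableSet_Ioi))
    ((ae_restrict_iff' measurableSet_Ioi).mpr (.of_forall fun t ht ↦ ?_))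
  have ht0 : 0 < t := zero_lt_one.trans ht
  have hpow : t ^ (-s.re) = t * t ^ (-(s + 1)).re := by
    rw [← Real.rpow_one_add' ht0.le]
    · simp
    · simp only [Complex.neg_re, Complex.add_re, Complex.one_re]
      linarith
  rw [norm_mul, Complex.norm_real, Real.norm_of_nonneg (Chebyshev.psi_nonneg _),
    Complex.norm_cpow_eq_rpow_re_of_pos ht0, hpow, ← mul_assoc]
  gcongr
  exact psi_le_six_mul ht0.le

lemma integral_psi_mul_cpow (hs : 1 < s.re) :
    ∫ t in Ioi (1 : ℝ), (ψ t : ℂ) * (t : ℂ) ^ (-(s + 1)) =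
      LSeries (fun n ↦ (ArithmeticFunction.vonMangoldt n : ℂ)) s / s := by
  have hsum (t : ℝ) : ∑ k ∈ Finset.Icc 1 ⌊t⌋₊, ArithmeticFunction.vonMangoldt k = ψ t := by
    rw [Chebyshev.psi, ← Finset.Icc_add_one_left_eq_Ioc, zero_add]
  have hO : (fun n : ℕ ↦ ∑ k ∈ Finset.Icc 1 n, ArithmeticFunction.vonMangoldt k) =O[atTop]
      fun n ↦ (n : ℝ) ^ (1 : ℝ) := by
    refine .of_bound 6 (.of_forall fun n ↦ ?_)
    have hn := hsum n
    rw [Nat.floor_natCast] at hn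
    rw [hn, Real.norm_of_nonneg (Chebyshev.psi_nonneg _), Real.rpow_one,
      Real.norm_of_nonneg n.cast_nonneg]
    exact psi_le_six_mul n.cast_nonneg
  have hs0 : s ≠ 0 := by
    rintro rfl
    norm_num at hs
  rw [LSeries_eq_mul_integral_of_nonneg _ zero_le_one hs hO
    fun n ↦ ArithmeticFunction.vonMangoldt_nonneg, mul_div_cancel_left₀ _ hs0]
  congr with t
  rw [← hsum t, Complex.ofReal_sum]

end MellinTransform

lemma setIntegral_Ioi_one_eq_integral_exp {E : Type*} [NormedAddCommGroup E] [NormedSpace ℝ E]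
    (F : ℝ → E) : ∫ t in Ioi (1 : ℝ), F t = ∫ u in Ioi (0 : ℝ), Real.exp u • F (Real.exp u) := by
  have himage : Real.exp '' Ioi 0 = Ioi 1 := by
    simp
  rw [← himage, integral_image_eq_integral_abs_deriv_smul measurableSet_Ioi
    (fun x _ ↦ (Real.hasDerivAt_exp x).hasDerivWithinAt) Real.exp_injective.injOn]
  simp only [Real.abs_exp]

/-- The relative error `(ψ(x) - x) / x` of the prime number theorem at `x = exp u`. -/
noncomputable def psiError (u : ℝ) : ℝ := ψ (Real.exp u) * Real.exp (-u) - 1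

lemma measurable_psiError : Measurable psiError := by
  have := Chebyshev.psi_mono.measurable
  unfold psiError
  fun_prop

lemma psi_exp_mul_exp_neg_le (u : ℝ) : ψ (Real.exp u) * Real.exp (-u) ≤ 6 := by
  rw [Real.exp_neg, ← div_eq_mul_inv, div_le_iff₀ (Real.exp_pos u)]
  exact psi_le_six_mul (Real.exp_pos u).le

lemma abs_psiError_le (u : ℝ) : |psiError u| ≤ 6 := by
  have hnonneg : 0 ≤ ψ (Real.exp u) * Real.exp (-u) :=
    mul_nonneg (Chebyshev.psi_nonneg _) (Real.exp_pos _).le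
  rw [psiError, abs_le]
  constructor <;> linarith [psi_exp_mul_exp_neg_le u]

lemma slowlyDecreasing_psiError : SlowlyDecreasing psiError := by
  refine fun ε hε ↦ ⟨ε / 6, by positivity, .of_forall fun u v hv ↦ ?_⟩
  have hψ : ψ (Real.exp u) ≤ ψ (Real.exp v) := Chebyshev.psi_mono (Real.exp_le_exp.mpr hv.1)
  have hexp : Real.exp (-u) * (1 - (v - u)) ≤ Real.exp (-v) := by
    calc Real.exp (-u) * (1 - (v - u)) ≤ Real.exp (-u) * Real.exp (-(v - u)) := by
          gcongr
          linarith [Real.add_one_le_exp (-(v - u))]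
      _ = Real.exp (-v) := by
          rw [← Real.exp_add]
          ring_nf
  calc psiError u - ε
      ≤ ψ (Real.exp u) * Real.exp (-u) - ψ (Real.exp u) * Real.exp (-u) * (v - u) - 1 := by
        have := mul_le_mul (psi_exp_mul_exp_neg_le u) (sub_left_le_of_le_add hv.2)
          (sub_nonneg.mpr hv.1) (by norm_num)
        rw [psiError]
        linarith
    _ = ψ (Real.exp u) * (Real.exp (-u) * (1 - (v - u))) - 1 := by ring
    _ ≤ psiError v := by
        have h1 : ψ (Real.exp u) * (Real.exp (-u) * (1 - (v - u))) ≤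
            ψ (Real.exp u) * Real.exp (-v) :=
          mul_le_mul_of_nonneg_left hexp (Chebyshev.psi_nonneg _)
        have h2 := mul_le_mul_of_nonneg_right hψ (Real.exp_pos (-v)).le
        rw [psiError]
        linarith

lemma integral_psiError_mul_exp {s : ℂ} (hs : 0 < s.re) :
    ∫ u in Ioi (0 : ℝ), (psiError u : ℂ) * Complex.exp (-(s * u)) =
      LSeries (fun n ↦ (ArithmeticFunction.vonMangoldt n : ℂ)) (s + 1) / (s + 1) - 1 / s := by
  have hs1 : 1 < (s + 1).re := by simpa
  have hpow : ∫ t in Ioi (1 : ℝ), (t : ℂ) ^ (-(s + 1)) = 1 / s := by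
    rw [integral_Ioi_cpow_of_lt (by simpa) one_pos]
    simp [neg_div_neg_eq]
  rw [← integral_psi_mul_cpow hs1, ← hpow, ← integral_sub (integrableOn_psi_mul_cpow hs1)
    (integrableOn_Ioi_cpow_of_lt (by simpa) one_pos), setIntegral_Ioi_one_eq_integral_exp]
  congr with u
  have hexp (z : ℂ) : (Real.exp u : ℂ) ^ z = Complex.exp (z * u) := by
    rw [Complex.ofReal_exp, Complex.cpow_def_of_ne_zero (Complex.exp_ne_zero _),
      ← Complex.ofReal_exp, ← Complex.ofReal_log (Real.exp_pos u).le, Real.log_exp, mul_comm]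
  simp only [hexp, Complex.real_smul, psiError]
  push_cast
  rw [sub_mul, mul_sub, one_mul, mul_assoc, mul_left_comm (Complex.exp u), ← Complex.exp_add,
    ← Complex.exp_add, ← Complex.exp_add]
  ring_nf

lemma tendsto_psiError : Tendsto psiError atTop (𝓝 0) := by
  obtain ⟨G, hGcont, hG⟩ := exists_continuousOn_LSeries_vonMangoldt_eq
  have hne (s : ℂ) (hs : 0 ≤ s.re) : s + 1 ≠ 0 := by
    intro h
    have := congr_arg Complex.re h
    simp only [Complex.add_re, Complex.one_re, Complex.zero_re] at this
    linarith
  refine slowlyDecreasing_psiError.tendsto_zero_of_laplace measurable_psiError abs_psiError_le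
    (g := fun s ↦ (G (s + 1) - 1) / (s + 1)) ?_ fun s hs ↦ ?_
  · refine ((hGcont.comp (by fun_prop) fun s hs ↦ ?_).sub continuousOn_const).div (by fun_prop) hne
    simpa using hs
  · have hs0 : s ≠ 0 := by
      rintro rfl
      simp at hs
    have := hne s hs.le
    rw [integral_psiError_mul_exp hs, hG _ (by simpa), add_sub_cancel_right]
    field_simp
    ring

theorem tendsto_psi_div_id : Tendsto (fun x ↦ ψ x / x) atTop (𝓝 1) := by
  have hlim := (tendsto_psiError.comp Real.tendsto_log_atTop).add_const 1
  rw [zero_add] at hlim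
  refine hlim.congr' ?_
  filter_upwards [eventually_gt_atTop 0] with x hx
  rw [Function.comp_apply, psiError, Real.exp_neg, Real.exp_log hx, sub_add_cancel, div_eq_mul_inv]

theorem tendsto_theta_div_id : Tendsto (fun x ↦ θ x / x) atTop (𝓝 1) := by
  have hdiff : Tendsto (fun x : ℝ ↦ (ψ x - θ x) / x) atTop (𝓝 0) := by
    have hlog : Tendsto (fun x : ℝ ↦ 2 * (Real.log x / √x)) atTop (𝓝 0) := by
      simpa [Real.sqrt_eq_rpow] using
        (isLittleO_log_rpow_atTop (one_half_pos (α := ℝ))).tendsto_div_nhds_zero.const_mul 2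
    refine squeeze_zero' ?_ ?_ hlog
    · filter_upwards [eventually_gt_atTop 0] with x hx
      exact div_nonneg (sub_nonneg.mpr (Chebyshev.theta_le_psi x)) hx.le
    · filter_upwards [eventually_ge_atTop 1] with x hx
      have hx0 : 0 < x := by linarith
      rw [div_le_iff₀ hx0]
      refine (Chebyshev.psi_sub_theta_le hx).trans_eq ?_
      field_simp
      rw [Real.sq_sqrt hx0.le, mul_comm]
  have hsub := tendsto_psi_div_id.sub hdiff
  rw [sub_zero] at hsub
  exact hsub.congr fun x ↦ by ring

/-! ### Sequences with divisible differences -/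

/-- The integers `4 ^ i * (m - 1 / 2).choose i`, where `(m - 1 / 2).choose i` is the generalized
binomial coefficient; the recursion in `m` is Pascal's rule. -/
def halfChoose : ℕ → ℕ → ℤ
  | 0, i => (-1) ^ i * (Nat.centralBinom i : ℤ)
  | _ + 1, 0 => 1
  | m + 1, i + 1 => halfChoose m (i + 1) + 4 * halfChoose m i

namespace halfChoose

@[simp]
lemma zero_right (m : ℕ) : halfChoose m 0 = 1 := by
  cases m <;> simp [halfChoose]

lemma succ_right_mul (m i : ℕ) :
    ((i : ℤ) + 1) * halfChoose m (i + 1) = 2 * (2 * (m : ℤ) - 1 - 2 * i) * halfChoose m i := by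
  induction m generalizing i with
  | zero =>
    have h : ((i : ℤ) + 1) * Nat.centralBinom (i + 1) = 2 * (2 * i + 1) * Nat.centralBinom i := by
      exact_mod_cast Nat.succ_mul_centralBinom_succ i
    simp only [halfChoose, pow_succ]
    push_cast
    linear_combination -(-1) ^ i * h
  | succ m ih =>
    cases i with
    | zero =>
      have := ih 0
      simp only [halfChoose, zero_right] at *
      push_cast at *
      linarith
    | succ i =>
      have h₁ := ih i
      have h₂ := ih (i + 1)
      simp only [halfChoose]
      push_cast at *
      linear_combination h₂ + 4 * h₁

lemma choose_succ_right_mul {m i : ℕ} (hi : i ≤ m) :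
    ((i : ℤ) + 1) * (m.choose (i + 1) : ℤ) = ((m : ℤ) - i) * (m.choose i : ℤ) := by
  rw [← Nat.cast_sub hi]
  exact_mod_cast (mul_comm _ _).trans ((Nat.choose_succ_right_eq m i).trans (mul_comm _ _))

lemma nonneg_and_le {m i : ℕ} (hi : i ≤ m) :
    0 ≤ halfChoose m i ∧ halfChoose m i ≤ 4 ^ i * (m.choose i : ℤ) := by
  induction i with
  | zero => simp
  | succ i ih =>
    obtain ⟨h_nonneg, h_le⟩ := ih (by omega)
    have hi_pos : (0 : ℤ) < i + 1 := by positivity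
    have h_factor : (0 : ℤ) ≤ 2 * (2 * m - 1 - 2 * i) := by omega
    constructor
    · refine nonneg_of_mul_nonneg_right ?_ hi_pos
      rw [succ_right_mul]
      positivity
    · refine le_of_mul_le_mul_left ?_ hi_pos
      calc ((i : ℤ) + 1) * halfChoose m (i + 1)
          = 2 * (2 * m - 1 - 2 * i) * halfChoose m i := succ_right_mul m i
        _ ≤ 2 * (2 * m - 1 - 2 * i) * (4 ^ i * m.choose i) := by gcongr
        _ ≤ 4 * (m - i) * (4 ^ i * m.choose i) :=
            mul_le_mul_of_nonneg_right (by linarith) (by positivity)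
        _ = (i + 1) * (4 ^ (i + 1) * m.choose (i + 1)) := by
            linear_combination (-4 * 4 ^ i) * choose_succ_right_mul (show i ≤ m by omega)

lemma mul_factorials (i r : ℕ) :
    halfChoose (i + r) i * ((i + r).factorial * (2 * r).factorial * i.factorial : ℕ) =
      ((2 * (i + r)).factorial * r.factorial : ℕ) := by
  induction i generalizing r with
  | zero => simp; ring
  | succ i ih =>
    have h := ih (r + 1)
    have h_rec := succ_right_mul (i + 1 + r) i
    rw [show i + (r + 1) = i + 1 + r by ring, show 2 * (r + 1) = 2 * r + 1 + 1 by ring,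
      Nat.factorial_succ (2 * r + 1), Nat.factorial_succ (2 * r), Nat.factorial_succ r] at h
    rw [Nat.factorial_succ i]
    have hr : (0 : ℤ) < (r : ℤ) + 1 := by positivity
    refine mul_left_cancel₀ hr.ne' ?_
    push_cast at h h_rec ⊢
    linear_combination h + ((r : ℤ) + 1) *
      ((i + 1 + r).factorial * (2 * r).factorial * i.factorial : ℤ) * h_rec

variable (R : Type*) [CommRing R]

lemma fwdDiff_zero_right (b : ℕ) : Δ_[1] (fun k ↦ (halfChoose (b + k) 0 : R)) = 0 := by
  ext k
  simp [fwdDiff]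

lemma fwdDiff_succ_right (b i : ℕ) :
    Δ_[1] (fun k ↦ (halfChoose (b + k) (i + 1) : R)) =
      (4 : R) • fun k ↦ (halfChoose (b + k) i : R) := by
  ext k
  simp [fwdDiff, halfChoose]

lemma iterate_fwdDiff_eq_zero {a i : ℕ} (h : i < a) (b : ℕ) :
    Δ_[1] ^[a] (fun k ↦ (halfChoose (b + k) i : R)) = 0 := by
  induction i generalizing a with
  | zero =>
    obtain ⟨a, rfl⟩ := Nat.exists_eq_succ_of_ne_zero h.ne'
    rw [Function.iterate_succ_apply, fwdDiff_zero_right]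
    ext k
    simp [fwdDiff_iter_eq_sum_shift]
  | succ i ih =>
    obtain ⟨a, rfl⟩ := Nat.exists_eq_succ_of_ne_zero (Nat.ne_zero_of_lt h)
    rw [Function.iterate_succ_apply, fwdDiff_succ_right, fwdDiff_iter_const_smul,
      ih (by omega), smul_zero]

end halfChoose

section padicNorm

variable {p : ℕ} [hp : Fact p.Prime]

lemma padicNorm_int_mul_le (z : ℤ) (x : ℚ) : padicNorm p (z * x) ≤ padicNorm p x := by
  rw [padicNorm.mul]
  exact mul_le_of_le_one_left (padicNorm.nonneg x) (padicNorm.of_int z)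

lemma padicNorm_prime_mul (x : ℚ) : padicNorm p (p * x) = (p : ℚ)⁻¹ * padicNorm p x := by
  rw [padicNorm.mul, padicNorm.padicNorm_p_of_prime]

lemma padicNorm_prime_mul_le_iff {x : ℚ} {a : ℕ} :
    padicNorm p (p * x) ≤ (p : ℚ) ^ (-((a + 1 : ℕ) : ℤ)) ↔
      padicNorm p x ≤ (p : ℚ) ^ (-(a : ℤ)) := by
  have hp_pos : (0 : ℚ) < p := by exact_mod_cast hp.out.pos
  rw [padicNorm_prime_mul, Nat.cast_succ, neg_add, add_comm, zpow_add₀ hp_pos.ne', zpow_neg_one,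
    mul_le_mul_iff_of_pos_left (inv_pos.2 hp_pos)]

end padicNorm

/-- A rational sequence whose `a`-th differences are all divisible by `p ^ a` in the `p`-adic
integers, for every `a`. -/
def HasDivisibleDifferences (p : ℕ) (f : ℕ → ℚ) : Prop :=
  ∀ a b : ℕ, padicNorm p (Δ_[1] ^[a] f b) ≤ (p : ℚ) ^ (-(a : ℤ))

namespace HasDivisibleDifferences

lemma padicNorm_apply_le_one {p : ℕ} {f : ℕ → ℚ} (hf : HasDivisibleDifferences p f) (b : ℕ) :
    padicNorm p (f b) ≤ 1 := by
  simpa using hf 0 b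

lemma comp_add {p : ℕ} {f : ℕ → ℚ} (hf : HasDivisibleDifferences p f) (m : ℕ) :
    HasDivisibleDifferences p (fun k ↦ f (k + m)) := by
  intro a b
  rw [fwdDiff_iter_comp_add]
  exact hf a _

protected lemma zero (p : ℕ) : HasDivisibleDifferences p 0 := by
  intro a b
  simp only [fwdDiff_iter_eq_sum_shift, Pi.zero_apply, smul_zero, Finset.sum_const_zero,
    padicNorm.zero]
  positivity

variable {p : ℕ} [hp : Fact p.Prime] {f g : ℕ → ℚ}

lemma int_smul (hf : HasDivisibleDifferences p f) (z : ℤ) :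
    HasDivisibleDifferences p ((z : ℚ) • f) := by
  intro a b
  rw [fwdDiff_iter_const_smul]
  exact (padicNorm_int_mul_le z _).trans (hf a b)

lemma exists_fwdDiff_eq (hf : HasDivisibleDifferences p f) :
    ∃ g, HasDivisibleDifferences p g ∧ Δ_[1] f = (p : ℚ) • g := by
  have hp_ne : (p : ℚ) ≠ 0 := by exact_mod_cast hp.out.ne_zero
  refine ⟨(p : ℚ)⁻¹ • Δ_[1] f, fun a b ↦ ?_, (smul_inv_smul₀ hp_ne _).symm⟩
  rw [fwdDiff_iter_const_smul, ← padicNorm_prime_mul_le_iff, Pi.smul_apply, smul_eq_mul,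
    mul_inv_cancel_left₀ hp_ne, ← Function.iterate_succ_apply]
  exact hf (a + 1) b

lemma of_fwdDiff_eq {c : ℤ} (h_norm : ∀ b, padicNorm p (f b) ≤ 1)
    (hg : HasDivisibleDifferences p g) (h : Δ_[1] f = (p : ℚ) • ((c : ℚ) • f + g)) :
    HasDivisibleDifferences p f := by
  intro a
  induction a with
  | zero => simpa using h_norm
  | succ a ih =>
    intro b
    rw [Function.iterate_succ_apply, h, fwdDiff_iter_const_smul, fwdDiff_iter_add,
      fwdDiff_iter_const_smul]
    refine padicNorm_prime_mul_le_iff.2 (padicNorm.nonarchimedean.trans (max_le ?_ (hg a b)))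
    exact (padicNorm_int_mul_le c _).trans (ih b)

/- Dividing every difference by `p` turns the Leibniz rule into
`(f * g)' = f (· + 1) * g' + f' * g`, so the claim for `a + 1` reduces to the one for `a`. -/
lemma mul (hf : HasDivisibleDifferences p f) (hg : HasDivisibleDifferences p g) :
    HasDivisibleDifferences p (f * g) := by
  intro a
  induction a generalizing f g with
  | zero =>
    intro b
    simpa [padicNorm.mul] using
      mul_le_one₀ (hf.padicNorm_apply_le_one b) (padicNorm.nonneg _) (hg.padicNorm_apply_le_one b)
  | succ a ih =>
    intro b
    obtain ⟨f', hf', hf_eq⟩ := hf.exists_fwdDiff_eq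
    obtain ⟨g', hg', hg_eq⟩ := hg.exists_fwdDiff_eq
    have h_leibniz : Δ_[1] (f * g) = (p : ℚ) • ((fun k ↦ f (k + 1)) * g' + f' * g) := by
      ext k
      have h₁ := congrFun hf_eq k
      have h₂ := congrFun hg_eq k
      simp only [fwdDiff, Pi.mul_apply, Pi.add_apply, Pi.smul_apply, smul_eq_mul] at h₁ h₂ ⊢
      linear_combination f (k + 1) * h₂ + g k * h₁
    rw [Function.iterate_succ_apply, h_leibniz, fwdDiff_iter_const_smul, fwdDiff_iter_add]
    exact padicNorm_prime_mul_le_iff.2 <|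
      padicNorm.nonarchimedean.trans (max_le (ih (hf.comp_add 1) hg' b) (ih hf' hg b))

lemma pow_of_dvd_sub_one {d : ℤ} (hd : (p : ℤ) ∣ d - 1) :
    HasDivisibleDifferences p (fun k ↦ (d : ℚ) ^ k) := by
  obtain ⟨c, hc⟩ := hd
  have hc' : (d : ℚ) - 1 = p * c := by exact_mod_cast hc
  refine of_fwdDiff_eq (c := c) (fun b ↦ ?_) (.zero p) ?_
  · exact_mod_cast padicNorm.of_int (d ^ b)
  · ext k
    simp only [fwdDiff, Pi.smul_apply, Pi.add_apply, Pi.zero_apply, smul_eq_mul]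
    linear_combination (d : ℚ) ^ k * hc'

lemma halfChoose (b i : ℕ) :
    HasDivisibleDifferences 2 (fun k ↦ (halfChoose (b + k) i : ℚ)) := by
  induction i with
  | zero =>
    refine of_fwdDiff_eq (c := 0) (fun k ↦ padicNorm.of_int _) (.zero 2) ?_
    simpa using halfChoose.fwdDiff_zero_right ℚ b
  | succ i ih =>
    refine of_fwdDiff_eq (c := 0) (fun k ↦ padicNorm.of_int _) (ih.int_smul 2) ?_
    rw [halfChoose.fwdDiff_succ_right, Int.cast_zero, zero_smul, zero_add, smul_smul]
    norm_num

end HasDivisibleDifferences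

lemma iterate_fwdDiff_inv_odd (a b : ℕ) :
    Δ_[1] ^[a + 1] (fun k : ℕ ↦ (2 * k + 1 : ℚ)⁻¹) b =
      -(2 * (a + 1) / (2 * b + 1)) * Δ_[1] ^[a] (fun k : ℕ ↦ (2 * k + 1 : ℚ)⁻¹) (b + 1) := by
  have hb (b : ℕ) : (2 * b + 1 : ℚ) ≠ 0 := by positivity
  induction a generalizing b with
  | zero =>
    have h₀ := hb b
    have h₁ := hb (b + 1)
    simp only [Function.iterate_succ_apply, Function.iterate_zero_apply, fwdDiff]
    push_cast at h₁ ⊢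
    field_simp
    ring
  | succ a ih =>
    have h := ih (b + 1)
    have h₀ := hb b
    have h₁ := hb (b + 1)
    rw [Function.iterate_succ_apply', fwdDiff] at h
    rw [Function.iterate_succ_apply', fwdDiff, ih, ih]
    push_cast at h₁ h ⊢
    field_simp at h ⊢
    linear_combination -h

lemma hasDivisibleDifferences_inv_odd :
    HasDivisibleDifferences 2 (fun k : ℕ ↦ (2 * k + 1 : ℚ)⁻¹) := by
  have h_odd (b : ℕ) : padicNorm 2 ((2 * b + 1 : ℚ)⁻¹) = 1 := by
    have : padicNorm 2 ((2 * b + 1 : ℕ) : ℚ) = 1 :=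
      (padicNorm.nat_eq_one_iff _).2 (by omega)
    push_cast at this
    rw [← one_div, padicNorm.div, padicNorm.one, this, one_div_one]
  intro a
  induction a with
  | zero => simp [h_odd]
  | succ a ih =>
    intro b
    set w : ℚ := Δ_[1] ^[a] (fun k : ℕ ↦ (2 * k + 1 : ℚ)⁻¹) (b + 1) with hw
    have h_eq : Δ_[1] ^[a + 1] (fun k : ℕ ↦ (2 * k + 1 : ℚ)⁻¹) b =
        (2 : ℕ) * ((-(a + 1) : ℤ) * ((2 * b + 1 : ℚ)⁻¹ * w)) := by
      rw [iterate_fwdDiff_inv_odd, ← hw]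
      push_cast
      ring
    rw [h_eq, padicNorm_prime_mul_le_iff]
    refine (padicNorm_int_mul_le _ _).trans ?_
    rw [padicNorm.mul, h_odd, one_mul]
    exact ih (b + 1)

/-- The integral over `[-1, 1]` of the polynomial `(d ^ k - x ^ (2 * k)) / (d - x ^ 2)`. -/
def quotientIntegral (d : ℤ) : ℕ → ℚ
  | 0 => 0
  | k + 1 => d * quotientIntegral d k + 2 * (2 * k + 1 : ℚ)⁻¹

lemma hasDivisibleDifferences_quotientIntegral {d : ℤ} (hd : Odd d) :
    HasDivisibleDifferences 2 (quotientIntegral d) := by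
  obtain ⟨c, rfl⟩ := hd
  have h_inv := hasDivisibleDifferences_inv_odd
  refine .of_fwdDiff_eq (c := c) (fun b ↦ ?_) h_inv ?_
  · induction b with
    | zero => simp [quotientIntegral]
    | succ b ih =>
      refine padicNorm.nonarchimedean.trans (max_le ?_ ?_)
      · exact (padicNorm_int_mul_le _ _).trans ih
      · exact (padicNorm_int_mul_le 2 _).trans
          (h_inv.padicNorm_apply_le_one b)
  · ext k
    simp only [fwdDiff, quotientIntegral, Pi.smul_apply, Pi.add_apply, smul_eq_mul]
    push_cast
    ring

lemma exists_lcmUpto_mul_quotientIntegral_eq {d : ℤ} {N k : ℕ} (hk : 2 * k ≤ N) :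
    ∃ z : ℤ, (Nat.lcmUpto N : ℚ) * quotientIntegral d k = z := by
  induction k with
  | zero => exact ⟨0, by simp [quotientIntegral]⟩
  | succ k ih =>
    obtain ⟨z, hz⟩ := ih (by omega)
    obtain ⟨c, hc⟩ : 2 * k + 1 ∣ Nat.lcmUpto N :=
      Finset.dvd_lcm (f := id) (Finset.mem_Icc.2 ⟨by omega, by omega⟩)
    have h_inv : (Nat.lcmUpto N : ℚ) * (2 * k + 1 : ℚ)⁻¹ = c := by
      rw [hc]
      push_cast
      field_simp
    refine ⟨d * z + 2 * c, ?_⟩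
    rw [quotientIntegral]
    push_cast
    linear_combination d * hz + 2 * h_inv

lemma exists_mul_eq_two_pow_mul {x : ℚ} {l P a : ℕ} {z : ℤ} (hP : Odd P)
    (hx : padicNorm 2 x ≤ (2 : ℚ) ^ (-(a : ℤ))) (hz : (l : ℚ) * x = P * z) :
    ∃ w : ℤ, (l : ℚ) * x = 2 ^ a * P * w := by
  have h_norm : padicNorm 2 ((P * z : ℤ) : ℚ) ≤ ((2 : ℕ) : ℚ) ^ (-(a : ℤ)) := by
    push_cast
    rw [← hz]
    exact (padicNorm_int_mul_le l x).trans hx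
  have h_coprime : IsCoprime ((2 : ℤ) ^ a) P :=
    (Nat.isCoprime_iff_coprime.2 (Nat.coprime_two_left.2 hP)).pow_left
  have h_dvd : (2 : ℤ) ^ a ∣ P * z := by
    exact_mod_cast padicNorm.dvd_iff_norm_le.2 h_norm
  obtain ⟨w, rfl⟩ := h_coprime.dvd_of_dvd_mul_left h_dvd
  exact ⟨w, by rw [hz]; push_cast; ring⟩

/-! ### Prime factors of the coefficients -/

/-- The `A`-th difference at `0` of `k ↦ 4 ^ C * (C + k - 1 / 2).choose C * e k`. -/
def differenceForm {R : Type*} [CommRing R] (A C : ℕ) (e : ℕ → R) : R :=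
  Δ_[1] ^[A] (fun k ↦ (halfChoose (C + k) C : R) * e k) 0

lemma differenceForm_eq_sum {R : Type*} [CommRing R] (A C : ℕ) (e : ℕ → R) :
    differenceForm A C e = ∑ k ∈ Finset.range (A + 1),
      (-1) ^ (A - k) * ((A.choose k * halfChoose (C + k) C : ℤ) : R) * e k := by
  simp only [differenceForm, fwdDiff_iter_eq_sum_shift, zero_add, smul_eq_mul, mul_one,
    zsmul_eq_mul]
  push_cast
  exact Finset.sum_congr rfl fun k _ ↦ by ring

lemma HasDivisibleDifferences.padicNorm_differenceForm_le {e : ℕ → ℚ}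
    (he : HasDivisibleDifferences 2 e) (A C : ℕ) :
    padicNorm 2 (differenceForm A C e) ≤ (2 : ℚ) ^ (-(A : ℤ)) :=
  ((HasDivisibleDifferences.halfChoose C C).mul he) A 0

lemma exists_mul_differenceForm_eq {A C l P : ℕ} {e : ℕ → ℚ}
    (he : ∀ k ≤ A, ∃ z : ℤ, (l : ℚ) * e k = z)
    (hP : ∀ k ≤ A, (P : ℤ) ∣ A.choose k * halfChoose (C + k) C) :
    ∃ z : ℤ, (l : ℚ) * differenceForm A C e = P * z := by
  choose! z hz using he
  choose! w hw using hP
  refine ⟨∑ k ∈ Finset.range (A + 1), (-1) ^ (A - k) * (w k * z k), ?_⟩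
  rw [differenceForm_eq_sum, Finset.mul_sum]
  push_cast
  rw [Finset.mul_sum]
  refine Finset.sum_congr rfl fun k hk ↦ ?_
  have hkA : k ≤ A := Finset.mem_range_succ_iff.1 hk
  have hw' : (A.choose k : ℚ) * halfChoose (C + k) C = P * w k := by exact_mod_cast hw k hkA
  linear_combination (-1) ^ (A - k) * l * e k * hw' + (-1) ^ (A - k) * P * w k * hz k hkA

lemma padicValNat_factorial_of_lt_sq {p m : ℕ} [hp : Fact p.Prime] (h : m < p ^ 2) :
    padicValNat p m.factorial = m / p := by
  have h_log : Nat.log p m < 2 := Nat.log_lt_of_lt_pow' two_ne_zero h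
  rw [padicValNat_factorial h_log]
  simp

lemma add_div_lt_of_mod {p c k : ℕ} (hc : p ≤ 2 * (c % p)) (hk : 2 * (k % p) < p) :
    (c + k) / p + 2 * k / p + c / p < 2 * (c + k) / p + k / p := by
  have hp : 0 < p := by omega
  have hc_lt := Nat.mod_lt c hp
  have h_two_k : 2 * k / p = 2 * (k / p) := by
    conv_lhs => rw [← Nat.div_add_mod k p, mul_add, mul_left_comm, Nat.mul_add_div hp,
      Nat.div_eq_of_lt hk, add_zero]
  have h_add : (c + k) / p = c / p + k / p + (c % p + k % p) / p := by
    conv_lhs => rw [← Nat.div_add_mod c p, ← Nat.div_add_mod k p, add_add_add_comm, ← mul_add,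
      Nat.mul_add_div hp]
  have h_two_add : 2 * (c + k) / p = 2 * (c / p + k / p) + 2 * (c % p + k % p) / p := by
    conv_lhs => rw [← Nat.div_add_mod c p, ← Nat.div_add_mod k p, add_add_add_comm, ← mul_add,
      mul_add, mul_left_comm, Nat.mul_add_div hp]
  rw [h_two_k, h_add, h_two_add]
  obtain h_lt | h_ge := lt_or_ge (c % p + k % p) p
  · have : 1 ≤ 2 * (c % p + k % p) / p := (Nat.one_le_div_iff hp).2 (by omega)
    rw [Nat.div_eq_of_lt h_lt]
    omega
  · have : (c % p + k % p) / p < 2 := (Nat.div_lt_iff_lt_mul hp).2 (by omega)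
    have : 2 ≤ 2 * (c % p + k % p) / p := (Nat.le_div_iff_mul_le hp).2 (by omega)
    omega

lemma prime_dvd_halfChoose {p c k : ℕ} (hp : p.Prime) (h_sq : 2 * (c + k) < p ^ 2)
    (hc : p ≤ 2 * (c % p)) (hk : 2 * (k % p) < p) : (p : ℤ) ∣ halfChoose (c + k) c := by
  have := Fact.mk hp
  obtain ⟨a, ha⟩ := Int.eq_ofNat_of_zero_le (halfChoose.nonneg_and_le (Nat.le_add_right c k)).1
  have h_fact : a * ((c + k).factorial * (2 * k).factorial * c.factorial) =
      (2 * (c + k)).factorial * k.factorial := by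
    exact_mod_cast ha ▸ halfChoose.mul_factorials c k
  have ha_ne : a ≠ 0 := by
    rintro rfl
    exact (Nat.mul_pos (Nat.factorial_pos _) (Nat.factorial_pos k)).ne (by simpa using h_fact)
  have h_val := congrArg (padicValNat p) h_fact
  have h_ne := Nat.factorial_ne_zero
  rw [padicValNat.mul ha_ne (mul_ne_zero (mul_ne_zero (h_ne _) (h_ne _)) (h_ne _)),
    padicValNat.mul (mul_ne_zero (h_ne _) (h_ne _)) (h_ne _), padicValNat.mul (h_ne _) (h_ne _),
    padicValNat.mul (h_ne _) (h_ne _)] at h_val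
  repeat rw [padicValNat_factorial_of_lt_sq (by omega)] at h_val
  have h_div := add_div_lt_of_mod hc hk
  rw [ha]
  exact_mod_cast dvd_of_one_le_padicValNat (by omega)

lemma prime_dvd_choose_of_mod_lt {p n k : ℕ} (hp : p.Prime) (h : n % p < k % p) :
    p ∣ n.choose k := by
  have := Fact.mk hp
  have h_lucas := Choose.choose_modEq_choose_mod_mul_choose_div_nat (n := n) (k := k) (p := p)
  rw [Nat.choose_eq_zero_of_lt h, zero_mul] at h_lucas
  exact (Nat.modEq_zero_iff_dvd).1 h_lucas

/-- Odd primes that divide every coefficient `A.choose k * halfChoose (C + k) C` with `k ≤ A`,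
cut out by the residues of `A` and `C`. -/
def goodPrimes (A C : ℕ) : Finset ℕ :=
  {p ∈ Finset.range (2 * C + 1) | p.Prime ∧ p ≠ 2 ∧ 2 * (C + A) < p ^ 2 ∧
    p ≤ 2 * (C % p) ∧ 2 * (A % p) < p}

lemma prime_of_mem_goodPrimes {A C p : ℕ} (hp : p ∈ goodPrimes A C) : p.Prime :=
  (Finset.mem_filter.1 hp).2.1

lemma odd_prod_goodPrimes (A C : ℕ) : Odd (∏ p ∈ goodPrimes A C, p) :=
  Finset.prod_induction _ Odd (fun _ _ ↦ Odd.mul) odd_one fun _ hp ↦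
    (prime_of_mem_goodPrimes hp).odd_of_ne_two (Finset.mem_filter.1 hp).2.2.1

lemma prod_goodPrimes_dvd {A C k : ℕ} (hk : k ≤ A) :
    ((∏ p ∈ goodPrimes A C, p : ℕ) : ℤ) ∣ A.choose k * halfChoose (C + k) C := by
  rw [Int.natCast_dvd]
  refine Finset.prod_primes_dvd _ (fun p hp ↦ (prime_of_mem_goodPrimes hp).prime) fun p hp ↦ ?_
  obtain ⟨-, hp_prime, -, h_sq, hC, hA⟩ := Finset.mem_filter.1 hp
  rw [← Int.natCast_dvd]
  obtain h_lt | h_le := lt_or_ge (A % p) (k % p)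
  · exact (Int.natCast_dvd_natCast.2 (prime_dvd_choose_of_mod_lt hp_prime h_lt)).mul_right _
  · exact (prime_dvd_halfChoose hp_prime (by omega) hC (by omega)).mul_left _

lemma log_prod_goodPrimes (A C : ℕ) :
    Real.log (∏ p ∈ goodPrimes A C, p : ℕ) = ∑ p ∈ goodPrimes A C, Real.log p := by
  rw [Nat.cast_prod, Real.log_prod]
  exact fun p hp ↦ Nat.cast_ne_zero.2 (prime_of_mem_goodPrimes hp).ne_zero

lemma le_two_mul_mod {c p i : ℕ} (h_le : (2 * i + 1) * p ≤ 2 * c) (h_lt : c < (i + 1) * p) :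
    p ≤ 2 * (c % p) := by
  have h_div : c / p = i := Nat.div_eq_of_lt_le (by nlinarith) h_lt
  have h := Nat.div_add_mod c p
  rw [h_div] at h
  nlinarith

lemma two_mul_mod_lt {a p j : ℕ} (h_le : j * p ≤ a) (h_lt : 2 * a < (2 * j + 1) * p) :
    2 * (a % p) < p := by
  have h_div : a / p = j := Nat.div_eq_of_lt_le h_le (by nlinarith)
  have h := Nat.div_add_mod a p
  rw [h_div] at h
  nlinarith

lemma theta_sub_theta {x y : ℝ} (h : x ≤ y) :
    θ y - θ x = ∑ p ∈ Finset.Ioc ⌊x⌋₊ ⌊y⌋₊ with p.Prime, Real.log p := by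
  rw [sub_eq_iff_eq_add', theta, theta, ← Finset.sum_union, ← Finset.filter_union,
    Finset.Ioc_union_Ioc_eq_Ioc (Nat.zero_le _) (Nat.floor_mono h)]
  exact Finset.disjoint_filter_filter (Finset.Ioc_disjoint_Ioc_of_le le_rfl)

/-- Left endpoints of the intervals `(lo * n, hi * n]` all of whose primes belong to
`goodPrimes (7 * n) (6 * n)`. -/
noncomputable def intervalLo : Fin 8 → ℝ := ![6, 3, 2, 14 / 9, 14 / 11, 3 / 4, 2 / 3, 14 / 23]

/-- Right endpoints of the intervals `(lo * n, hi * n]` all of whose primes belong to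
`goodPrimes (7 * n) (6 * n)`. -/
noncomputable def intervalHi : Fin 8 → ℝ :=
  ![7, 7 / 2, 7 / 3, 12 / 7, 4 / 3, 7 / 9, 7 / 10, 12 / 19]

lemma intervalLo_ge (t : Fin 8) : 0.6 ≤ intervalLo t := by
  fin_cases t <;> norm_num [intervalLo]

lemma intervalLo_le_intervalHi (t : Fin 8) : intervalLo t ≤ intervalHi t := by
  fin_cases t <;> norm_num [intervalLo, intervalHi]

lemma intervalHi_le_intervalLo_of_lt {t u : Fin 8} (h : t < u) :
    intervalHi u ≤ intervalLo t := by
  fin_cases t <;> fin_cases u <;> first | (norm_num [intervalLo, intervalHi]; done) | simp at h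

/- On the `t`-th interval `⌊6 * n / p⌋ = i`, `⌊7 * n / p⌋ = j`, with fractional parts at least
and less than one half respectively. -/
lemma exists_quotients_interval (t : Fin 8) : ∃ i j : ℕ,
    (2 * i + 1) * intervalHi t ≤ 12 ∧ 6 ≤ (i + 1) * intervalLo t ∧
      j * intervalHi t ≤ 7 ∧ 14 ≤ (2 * j + 1) * intervalLo t := by
  refine ⟨![0, 1, 2, 3, 4, 7, 8, 9] t, ![1, 2, 3, 4, 5, 9, 10, 11] t, ?_⟩
  fin_cases t <;> norm_num [intervalLo, intervalHi]

lemma mem_goodPrimes_of_mem_interval {n p : ℕ} {t : Fin 8} (hn : 100 ≤ n) (hp : p.Prime)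
    (h_lo : intervalLo t * n < p) (h_hi : p ≤ intervalHi t * n) :
    p ∈ goodPrimes (7 * n) (6 * n) := by
  obtain ⟨i, j, hi_hi, hi_lo, hj_hi, hj_lo⟩ := exists_quotients_interval t
  have h_floor_le (c u : ℝ) (hc : 0 ≤ c) (h : c * intervalHi t ≤ u) : c * p ≤ u * n := by
    calc c * p ≤ c * (intervalHi t * n) := by gcongr
      _ = c * intervalHi t * n := by ring
      _ ≤ u * n := by gcongr
  have h_lt_floor (c u : ℝ) (hc : 0 < c) (h : u ≤ c * intervalLo t) : u * n < c * p := by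
    calc u * n ≤ c * intervalLo t * n := by gcongr
      _ = c * (intervalLo t * n) := by ring
      _ < c * p := by gcongr
  have h₁ : (2 * i + 1) * p ≤ 12 * n := by
    exact_mod_cast h_floor_le (2 * i + 1) 12 (by positivity) hi_hi
  have h₂ : 6 * n < (i + 1) * p := by
    exact_mod_cast h_lt_floor (i + 1) 6 (by positivity) hi_lo
  have h₃ : j * p ≤ 7 * n := by exact_mod_cast h_floor_le j 7 (by positivity) hj_hi
  have h₄ : 14 * n < (2 * j + 1) * p := by
    exact_mod_cast h_lt_floor (2 * j + 1) 14 (by positivity) hj_lo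
  have h_large : 6 * n < 10 * p := by
    exact_mod_cast h_lt_floor 10 6 (by norm_num) (by linarith [intervalLo_ge t])
  refine Finset.mem_filter.2 ⟨?_, hp, by omega, by nlinarith, ?_, ?_⟩
  · rw [Finset.mem_range]
    nlinarith
  · exact le_two_mul_mod (by omega) h₂
  · exact two_mul_mod_lt h₃ (by omega)

lemma sum_theta_sub_theta_le {n : ℕ} (hn : 100 ≤ n) :
    ∑ t, (θ (intervalHi t * n) - θ (intervalLo t * n)) ≤
      Real.log (∏ p ∈ goodPrimes (7 * n) (6 * n), p : ℕ) := by
  have h_lo_nonneg (t : Fin 8) : 0 ≤ intervalLo t * n := by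
    have := intervalLo_ge t
    positivity
  set primesIn : Fin 8 → Finset ℕ := fun t ↦
    {p ∈ Finset.Ioc ⌊intervalLo t * n⌋₊ ⌊intervalHi t * n⌋₊ | p.Prime}
  have h_disj_of_lt {t u : Fin 8} (h : t < u) : Disjoint (primesIn t) (primesIn u) := by
    refine Finset.disjoint_filter_filter (Finset.Ioc_disjoint_Ioc_of_le ?_).symm
    gcongr
    exact intervalHi_le_intervalLo_of_lt h
  have h_disj : ((Finset.univ : Finset (Fin 8)) : Set (Fin 8)).PairwiseDisjoint primesIn := by
    intro t _ u _ h_ne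
    exact h_ne.lt_or_gt.elim h_disj_of_lt fun h ↦ (h_disj_of_lt h).symm
  calc ∑ t, (θ (intervalHi t * n) - θ (intervalLo t * n))
      = ∑ t, ∑ p ∈ primesIn t, Real.log p :=
        Finset.sum_congr rfl fun t _ ↦ theta_sub_theta (by
          have := intervalLo_le_intervalHi t
          gcongr)
    _ = ∑ p ∈ Finset.univ.biUnion primesIn, Real.log p := (Finset.sum_biUnion h_disj).symm
    _ ≤ ∑ p ∈ goodPrimes (7 * n) (6 * n), Real.log p := by
        refine Finset.sum_le_sum_of_subset_of_nonneg ?_ fun p _ _ ↦ Real.log_natCast_nonneg p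
        intro p hp
        obtain ⟨t, -, hpt⟩ := Finset.mem_biUnion.1 hp
        obtain ⟨h_Ioc, hp_prime⟩ := Finset.mem_filter.1 hpt
        obtain ⟨h_lo, h_hi⟩ := Finset.mem_Ioc.1 h_Ioc
        refine mem_goodPrimes_of_mem_interval hn hp_prime ((Nat.floor_lt (h_lo_nonneg t)).1 h_lo) ?_
        exact (Nat.le_floor_iff' hp_prime.ne_zero).1 h_hi
    _ = Real.log (∏ p ∈ goodPrimes (7 * n) (6 * n), p : ℕ) := (log_prod_goodPrimes _ _).symm

lemma tendsto_comp_mul_natCast_div {f : ℝ → ℝ} (hf : Tendsto (fun x ↦ f x / x) atTop (𝓝 1))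
    {c : ℝ} (hc : 0 < c) : Tendsto (fun n : ℕ ↦ f (c * n) / n) atTop (𝓝 c) := by
  have h := (hf.comp (tendsto_natCast_atTop_atTop.const_mul_atTop hc)).const_mul c
  rw [mul_one] at h
  refine h.congr fun n ↦ ?_
  simp only [Function.comp_apply]
  field_simp

/-- The number by which `formIntegral d A C` is multiplied to give, up to a factor `d`, a linear
form in `1` and `sqrtMulLog d` with integer coefficients: the common denominator
`lcm (1, …, 2 * A)`, divided by the factor `2 ^ A * ∏ p ∈ goodPrimes A C, p` common to the
coefficients; `4 ^ C` comes from `halfChoose`. -/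
noncomputable def formScale (A C : ℕ) : ℝ :=
  Nat.lcmUpto (2 * A) * 4 ^ C / (2 ^ A * (∏ p ∈ goodPrimes A C, p : ℕ))

lemma prod_goodPrimes_pos (A C : ℕ) : (0 : ℝ) < (∏ p ∈ goodPrimes A C, p : ℕ) :=
  Nat.cast_pos.2 (odd_prod_goodPrimes A C).pos

lemma formScale_pos (A C : ℕ) : 0 < formScale A C :=
  div_pos (mul_pos (Nat.cast_pos.2 (Nat.lcmUpto_pos _)) (by positivity))
    (mul_pos (by positivity) (prod_goodPrimes_pos A C))

lemma log_formScale (A C : ℕ) :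
    Real.log (formScale A C) = ψ (2 * A) + (2 * C - A) * Real.log 2 -
      Real.log (∏ p ∈ goodPrimes A C, p : ℕ) := by
  have h_lcm : (Nat.lcmUpto (2 * A) : ℝ) ≠ 0 := Nat.cast_ne_zero.2 (Nat.lcmUpto_ne_zero _)
  have h_prod := (prod_goodPrimes_pos A C).ne'
  have h_psi := psi_eq_log_lcmUpto (2 * A)
  push_cast at h_psi
  rw [formScale, Real.log_div (by positivity) (by positivity), Real.log_mul h_lcm (by positivity),
    Real.log_mul (by positivity) h_prod, Real.log_pow, Real.log_pow, h_psi,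
    show (4 : ℝ) = 2 ^ 2 by norm_num, Real.log_pow]
  push_cast
  ring

lemma eventually_formScale_le :
    ∀ᶠ n : ℕ in atTop, formScale (7 * n) (6 * n) ≤ Real.exp (15.33 * n) := by
  have h_sum : Tendsto (fun n : ℕ ↦
        ∑ t, (θ (intervalHi t * n) / n - θ (intervalLo t * n) / n)) atTop
      (𝓝 (∑ t, (intervalHi t - intervalLo t))) := by
    refine tendsto_finsetSum _ fun t _ ↦ ?_
    have h_lo := intervalLo_ge t
    have h_le := intervalLo_le_intervalHi t
    exact (tendsto_comp_mul_natCast_div tendsto_theta_div_id (by linarith)).sub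
      (tendsto_comp_mul_natCast_div tendsto_theta_div_id (by linarith))
  have h_lim := (tendsto_comp_mul_natCast_div tendsto_psi_div_id (c := 14) (by norm_num)).sub h_sum
  have h_value : 14 - ∑ t, (intervalHi t - intervalLo t) < 15.33 - 5 * Real.log 2 := by
    have := Real.log_two_lt_d9
    norm_num [Fin.sum_univ_succ, intervalLo, intervalHi]
    linarith
  filter_upwards [h_lim.eventually_lt_const h_value, eventually_ge_atTop 100] with n h_lt hn
  have hn_pos : (0 : ℝ) < n := by positivity
  have h_le := sum_theta_sub_theta_le hn
  simp only [← sub_div, ← Finset.sum_div] at h_lt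
  rw [div_lt_iff₀ hn_pos] at h_lt
  rw [← Real.log_le_iff_le_exp (formScale_pos _ _), log_formScale]
  simp only [Nat.cast_mul, Nat.cast_ofNat]
  rw [show (2 * (7 * n) : ℝ) = 14 * n by ring]
  linarith

/-! ### Integrals and linear forms -/

/-- The moments `∫ x ^ (2 * k) / (d - x ^ 2) ^ m` over `[-1, 1]`. -/
noncomputable def evenMoment (d : ℝ) (m k : ℕ) : ℝ :=
  ∫ x in (-1 : ℝ)..1, x ^ (2 * k) / (d - x ^ 2) ^ m

section Moments

variable {d : ℝ}

lemma sub_sq_pos {x : ℝ} (hd : 1 < d) (hx : x ∈ uIcc (-1 : ℝ) 1) : 0 < d - x ^ 2 := by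
  rw [uIcc_of_le (by norm_num)] at hx
  nlinarith [hx.1, hx.2]

lemma intervalIntegrable_div_sub_sq_pow (hd : 1 < d) {f : ℝ → ℝ} (hf : Continuous f) (m : ℕ) :
    IntervalIntegrable (fun x ↦ f x / (d - x ^ 2) ^ m) volume (-1) 1 :=
  ContinuousOn.intervalIntegrable <| hf.continuousOn.div (by fun_prop) fun _ hx ↦
    pow_ne_zero m (sub_sq_pos hd hx).ne'

lemma hasDerivAt_pow_div_sub_sq_pow (k m : ℕ) {x : ℝ} (hx : d - x ^ 2 ≠ 0) :
    HasDerivAt (fun x : ℝ ↦ x ^ (2 * k + 1) / (d - x ^ 2) ^ m)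
      ((2 * k + 1) * (x ^ (2 * k) / (d - x ^ 2) ^ m) +
        2 * m * (x ^ (2 * (k + 1)) / (d - x ^ 2) ^ (m + 1))) x := by
  have h_den := ((hasDerivAt_pow 2 x).const_sub d).pow m
  convert! (hasDerivAt_pow (2 * k + 1) x).div h_den (pow_ne_zero m hx) using 1
  cases m with
  | zero => simp
  | succ m =>
    push_cast
    simp only [Pi.pow_apply]
    field_simp
    ring

lemma evenMoment_recurrence (hd : 1 < d) (m k : ℕ) :
    (2 * k + 1) * evenMoment d m k + 2 * m * evenMoment d (m + 1) (k + 1) =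
      2 / (d - 1) ^ m := by
  have h₁ := (intervalIntegrable_div_sub_sq_pow hd (continuous_pow (2 * k)) m).const_mul
    (2 * (k : ℝ) + 1)
  have h₂ := (intervalIntegrable_div_sub_sq_pow hd (continuous_pow (2 * (k + 1)))
    (m + 1)).const_mul (2 * (m : ℝ))
  have h_ftc := intervalIntegral.integral_eq_sub_of_hasDerivAt
    (fun x hx ↦ hasDerivAt_pow_div_sub_sq_pow k m (sub_sq_pos hd hx).ne') (h₁.add h₂)
  rw [intervalIntegral.integral_add h₁ h₂, intervalIntegral.integral_const_mul,
    intervalIntegral.integral_const_mul] at h_ftc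
  rw [evenMoment, evenMoment, h_ftc, (odd_two_mul_add_one k).neg_one_pow]
  norm_num
  ring

lemma iterate_fwdDiff_evenMoment (hd : 1 < d) (m a k : ℕ) :
    Δ_[1] ^[a] (evenMoment d m) k =
      ∫ x in (-1 : ℝ)..1, x ^ (2 * k) * (x ^ 2 - 1) ^ a / (d - x ^ 2) ^ m := by
  induction a generalizing k with
  | zero => simp [evenMoment]
  | succ a ih =>
    rw [Function.iterate_succ_apply', fwdDiff, ih, ih, ← intervalIntegral.integral_sub
      (intervalIntegrable_div_sub_sq_pow hd (by fun_prop) m)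
      (intervalIntegrable_div_sub_sq_pow hd (by fun_prop) m)]
    refine intervalIntegral.integral_congr fun x _ ↦ ?_
    ring

/-- The `A`-th difference at `0` of `k ↦ 4 ^ C * (B + k - 1 / 2).choose C` times the moment of
order `B + k - C`; the latter subtraction is truncated, so only `C ≤ B` is meaningful. -/
noncomputable def momentForm (d : ℝ) (A B C m : ℕ) : ℝ :=
  Δ_[1] ^[A] (fun k ↦ (halfChoose (B + k) C : ℝ) * evenMoment d m (B + k - C)) 0

/- The recurrence for the moments lowers `C` up to a multiple of `halfChoose (B + ·) C`, which is
a polynomial of degree `C` and is annihilated by the `A`-th difference. -/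
lemma succ_mul_momentForm_succ (hd : 1 < d) {A B C : ℕ} (hA : C < A) (hB : C < B) (m : ℕ) :
    (C + 1) * momentForm d A B (C + 1) m = -4 * m * momentForm d A B C (m + 1) := by
  have h_fun : ((C + 1 : ℝ) • fun k ↦ (halfChoose (B + k) (C + 1) : ℝ) *
        evenMoment d m (B + k - (C + 1))) =
      ((-4 * m : ℝ) • fun k ↦ (halfChoose (B + k) C : ℝ) * evenMoment d (m + 1) (B + k - C)) +
        (4 / (d - 1) ^ m) • fun k ↦ (halfChoose (B + k) C : ℝ) := by
    ext k
    obtain ⟨r, hr⟩ : ∃ r, B + k = C + 1 + r := ⟨B + k - (C + 1), by omega⟩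
    have h_moment := evenMoment_recurrence hd m r
    have h_choose : ((C : ℝ) + 1) * halfChoose (B + k) (C + 1) =
        2 * (2 * (B + k : ℕ) - 1 - 2 * C) * halfChoose (B + k) C := by
      exact_mod_cast halfChoose.succ_right_mul (B + k) C
    simp only [Pi.smul_apply, Pi.add_apply, smul_eq_mul]
    rw [hr] at h_choose ⊢
    rw [Nat.add_sub_cancel_left, show C + 1 + r - C = r + 1 by omega]
    push_cast at h_choose
    linear_combination evenMoment d m r * h_choose + 2 * halfChoose (C + 1 + r) C * h_moment
  have h := congrArg (fun f ↦ Δ_[1] ^[A] f 0) h_fun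
  simpa only [momentForm, fwdDiff_iter_add, fwdDiff_iter_const_smul,
    halfChoose.iterate_fwdDiff_eq_zero ℝ hA, smul_zero, add_zero, Pi.smul_apply,
    Pi.zero_apply, smul_eq_mul] using h

lemma momentForm_eq (hd : 1 < d) {A B C : ℕ} (hA : C ≤ A) (hB : C ≤ B) (m : ℕ) :
    momentForm d A B C (m + 1) =
      (-4) ^ C * (m + C).choose C * momentForm d A B 0 (m + 1 + C) := by
  induction C generalizing m with
  | zero => simp
  | succ C ih =>
    have h_choose : ((m + (C + 1)).choose (C + 1) : ℝ) * (C + 1) =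
        (m + 1 + C).choose C * (m + 1) := by
      have h := Nat.choose_succ_right_eq (m + 1 + C) C
      rw [Nat.add_sub_cancel_right] at h
      rw [show m + (C + 1) = m + 1 + C by ring]
      exact_mod_cast h
    have h_succ := succ_mul_momentForm_succ hd hA hB (m + 1)
    rw [ih (by omega) (by omega) (m + 1)] at h_succ
    refine mul_left_cancel₀ (Nat.cast_add_one_ne_zero C : (C + 1 : ℝ) ≠ 0) (h_succ.trans ?_)
    rw [show m + 1 + 1 + C = m + 1 + (C + 1) by ring, pow_succ]
    push_cast
    linear_combination 4 * (-4) ^ C * momentForm d A B 0 (m + 1 + (C + 1)) * h_choose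

lemma momentForm_zero (hd : 1 < d) (A B m : ℕ) :
    momentForm d A B 0 m =
      ∫ x in (-1 : ℝ)..1, x ^ (2 * B) * (x ^ 2 - 1) ^ A / (d - x ^ 2) ^ m := by
  have h := fwdDiff_iter_comp_add 1 (evenMoment d m) B A 0
  rw [zero_add, iterate_fwdDiff_evenMoment hd] at h
  rw [← h, momentForm]
  simp [add_comm B]

end Moments

lemma evenMoment_one_succ {d : ℝ} (hd : 1 < d) (k : ℕ) :
    evenMoment d 1 (k + 1) = d * evenMoment d 1 k - 2 * (2 * k + 1 : ℝ)⁻¹ := by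
  have h_pow : ∫ x in (-1 : ℝ)..1, x ^ (2 * k) = 2 * (2 * k + 1 : ℝ)⁻¹ := by
    rw [integral_pow, (odd_two_mul_add_one k).neg_one_pow]
    push_cast
    ring
  rw [← h_pow, evenMoment, evenMoment, ← intervalIntegral.integral_const_mul,
    ← intervalIntegral.integral_sub
      ((intervalIntegrable_div_sub_sq_pow hd (continuous_pow _) 1).const_mul d)
      ((continuous_pow _).intervalIntegrable _ _)]
  refine intervalIntegral.integral_congr fun x hx ↦ ?_
  have := (sub_sq_pos hd hx).ne'
  field_simp
  ring

lemma evenMoment_one_eq {d : ℤ} (hd : 1 < d) (k : ℕ) :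
    evenMoment d 1 k = d ^ k * evenMoment d 1 0 - quotientIntegral d k := by
  induction k with
  | zero => simp [quotientIntegral]
  | succ k ih =>
    rw [evenMoment_one_succ (by exact_mod_cast hd), ih, quotientIntegral]
    push_cast
    ring

/-- The integral giving the size of the linear forms. -/
noncomputable def formIntegral (d : ℝ) (A C : ℕ) : ℝ :=
  ∫ x in (-1 : ℝ)..1, x ^ (2 * C) * (1 - x ^ 2) ^ A / (d - x ^ 2) ^ (C + 1)

lemma differenceForm_eq_formIntegral {d : ℤ} (hd : 1 < d) {A C : ℕ} (h : C ≤ A) :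
    differenceForm A C (fun k ↦ (d : ℝ) ^ k) * evenMoment d 1 0 -
      differenceForm A C (fun k ↦ (quotientIntegral d k : ℝ)) =
        (-4) ^ C * (-1) ^ A * formIntegral d A C := by
  have hd' : (1 : ℝ) < d := by exact_mod_cast hd
  calc differenceForm A C (fun k ↦ (d : ℝ) ^ k) * evenMoment d 1 0 -
        differenceForm A C (fun k ↦ (quotientIntegral d k : ℝ))
      = momentForm d A C C 1 := by
        simp only [momentForm, Nat.add_sub_cancel_left]
        rw [← differenceForm, differenceForm_eq_sum, differenceForm_eq_sum, differenceForm_eq_sum,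
          Finset.sum_mul, ← Finset.sum_sub_distrib]
        refine Finset.sum_congr rfl fun k _ ↦ ?_
        rw [evenMoment_one_eq hd k]
        ring
    _ = (-4) ^ C * momentForm d A C 0 (0 + 1 + C) := by
        simpa using momentForm_eq hd' h le_rfl 0
    _ = (-4) ^ C * (-1) ^ A * formIntegral d A C := by
        rw [momentForm_zero hd', formIntegral, mul_assoc,
          ← intervalIntegral.integral_const_mul ((-1) ^ A)]
        congr 1
        refine intervalIntegral.integral_congr fun x _ ↦ ?_
        rw [← neg_sub 1 (x ^ 2), neg_pow, show 0 + 1 + C = C + 1 by ring]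
        ring

/-- The numbers whose rational approximations are studied; `α_k` is the case `d = 2 * k + 1`. -/
noncomputable def sqrtMulLog (d : ℝ) : ℝ := √d * Real.log ((√d - 1) / (√d + 1))

lemma sqrtMulLog_eq_neg_mul_evenMoment {d : ℝ} (hd : 1 < d) :
    sqrtMulLog d = -d * evenMoment d 1 0 := by
  have h_sq : √d ^ 2 = d := Real.sq_sqrt (by linarith)
  have h_one_lt : 1 < √d := Real.lt_sqrt_of_sq_lt (by linarith)
  have h_deriv (x : ℝ) (hx : x ∈ uIcc (-1 : ℝ) 1) : HasDerivAt
      (fun x : ℝ ↦ 1 / (2 * √d) * (Real.log (√d + x) - Real.log (√d - x)))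
      (x ^ (2 * 0) / (d - x ^ 2) ^ 1) x := by
    have h_den := sub_sq_pos hd hx
    rw [uIcc_of_le (by norm_num)] at hx
    have h_add : √d + x ≠ 0 := by linarith [hx.1]
    have h_sub : √d - x ≠ 0 := by linarith [hx.2]
    convert! ((((hasDerivAt_id x).const_add √d).log h_add).sub
      (((hasDerivAt_id x).const_sub √d).log h_sub)).const_mul (1 / (2 * √d)) using 1
    have h_prod : d - x ^ 2 = (√d + x) * (√d - x) := by linear_combination -h_sq
    simp only [id, h_prod]
    field_simp
    ring
  rw [sqrtMulLog, evenMoment, intervalIntegral.integral_eq_sub_of_hasDerivAt h_deriv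
    (intervalIntegrable_div_sub_sq_pow hd (continuous_pow _) 1),
    Real.log_div (by linarith) (by linarith), ← sub_eq_add_neg, sub_neg_eq_add]
  field_simp
  rw [h_sq]
  ring

lemma map_differenceForm {R S : Type*} [CommRing R] [CommRing S] (φ : R →+* S) (A C : ℕ)
    (e : ℕ → R) : φ (differenceForm A C e) = differenceForm A C fun k ↦ φ (e k) := by
  simp [differenceForm_eq_sum]

/- The factors `2 ^ A` and `∏ p ∈ goodPrimes A C, p` both cancel: the first because the differences
of `e` are divisible by powers of `2`, the second because it divides every coefficient. -/
lemma exists_lcmUpto_mul_differenceForm_eq {A C : ℕ} {e : ℕ → ℚ}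
    (he : HasDivisibleDifferences 2 e)
    (h_int : ∀ k ≤ A, ∃ z : ℤ, (Nat.lcmUpto (2 * A) : ℚ) * e k = z) :
    ∃ a : ℤ, formScale A C * differenceForm A C (fun k ↦ (e k : ℝ)) = 4 ^ C * a := by
  obtain ⟨z, hz⟩ := exists_mul_differenceForm_eq h_int fun _ ↦ prod_goodPrimes_dvd (C := C)
  obtain ⟨a, ha⟩ := exists_mul_eq_two_pow_mul (odd_prod_goodPrimes A C)
    (he.padicNorm_differenceForm_le A C) hz
  have ha' : (Nat.lcmUpto (2 * A) : ℝ) * differenceForm A C (fun k ↦ (e k : ℝ)) =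
      2 ^ A * (∏ p ∈ goodPrimes A C, p : ℕ) * a := by
    have h_map := map_differenceForm (Rat.castHom ℝ) A C e
    simp only [Rat.coe_castHom] at h_map
    rw [← h_map]
    exact_mod_cast congrArg ((↑) : ℚ → ℝ) ha
  have h_prod := (prod_goodPrimes_pos A C).ne'
  refine ⟨a, ?_⟩
  rw [formScale, div_mul_eq_mul_div, div_eq_iff (by positivity)]
  linear_combination 4 ^ C * ha'

lemma exists_linearForm {d : ℤ} (hd : 1 < d) (h_odd : Odd d) {A C : ℕ} (h : C ≤ A) :
    ∃ a b : ℤ, |a * sqrtMulLog d + b| = d * (formScale A C * |formIntegral d A C|) ∧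
      4 ^ C * |(a : ℝ)| = formScale A C * |differenceForm A C fun k ↦ (d : ℝ) ^ k| := by
  have hd_one : (1 : ℝ) < d := by exact_mod_cast hd
  obtain ⟨a, ha⟩ : ∃ a : ℤ, formScale A C * differenceForm A C (fun k ↦ (d : ℝ) ^ k) =
      4 ^ C * a := by
    have h_pow :=
      HasDivisibleDifferences.pow_of_dvd_sub_one (p := 2) (h_odd.sub_odd odd_one).two_dvd
    simpa using exists_lcmUpto_mul_differenceForm_eq (A := A) (C := C) h_pow
      fun k _ ↦ ⟨Nat.lcmUpto (2 * A) * d ^ k, by push_cast; rfl⟩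
  obtain ⟨b, hb⟩ := exists_lcmUpto_mul_differenceForm_eq (A := A) (C := C)
    (hasDivisibleDifferences_quotientIntegral h_odd)
    fun k hk ↦ exists_lcmUpto_mul_quotientIntegral_eq (by omega)
  refine ⟨a, d * b, ?_, ?_⟩
  · have h_eq : (4 : ℝ) ^ C * (a * sqrtMulLog d + (d * b : ℤ)) =
        -(d * (formScale A C * ((-4) ^ C * (-1) ^ A * formIntegral d A C))) := by
      rw [← differenceForm_eq_formIntegral hd h, sqrtMulLog_eq_neg_mul_evenMoment hd_one]
      push_cast
      linear_combination d * evenMoment d 1 0 * ha - d * hb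
    refine mul_left_cancel₀ (pow_ne_zero C (four_ne_zero' ℝ)) ?_
    have h_abs := congrArg abs h_eq
    simp only [abs_mul, abs_neg, abs_pow, abs_one, one_pow, Nat.abs_ofNat,
      abs_of_pos (formScale_pos A C), abs_of_pos (one_pos.trans hd_one)] at h_abs
    rw [h_abs]
    ring
  · have h_abs := congrArg abs ha
    rw [abs_mul, abs_mul, abs_of_pos (formScale_pos A C), abs_pow, Nat.abs_ofNat] at h_abs
    exact h_abs.symm

lemma iterate_fwdDiff_mul_pow_succ {R : Type*} [CommRing R] (d : R) (f : ℕ → R) (A : ℕ) :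
    Δ_[1] ^[A + 1] (fun k ↦ f k * d ^ k) =
      (d - 1) • Δ_[1] ^[A] (fun k ↦ f k * d ^ k) +
        d • Δ_[1] ^[A] (fun k ↦ Δ_[1] f k * d ^ k) := by
  rw [Function.iterate_succ_apply, ← fwdDiff_iter_const_smul, ← fwdDiff_iter_const_smul,
    ← fwdDiff_iter_add]
  congr 1
  ext k
  simp only [fwdDiff, Pi.add_apply, Pi.smul_apply, smul_eq_mul]
  ring

/- In `f * d ^ ·` a difference either hits `d ^ ·`, which costs `d - 1`, or lowers the degree `i`,
which costs `d / w` relative to the bound `K * (4 * w) ^ i`. -/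
lemma abs_iterate_fwdDiff_halfChoose_mul_pow_le {d w K : ℝ} (hd : 1 ≤ d) (hw : 0 < w) {b i : ℕ}
    (hK : ∀ j ≤ i, |(halfChoose b j : ℝ)| ≤ K * (4 * w) ^ j) (A : ℕ) :
    |Δ_[1] ^[A] (fun k ↦ (halfChoose (b + k) i : ℝ) * d ^ k) 0| ≤
      K * (4 * w) ^ i * (d - 1 + d / w) ^ A := by
  have hK_nonneg : 0 ≤ K := by simpa using (abs_nonneg _).trans (hK 0 i.zero_le)
  have hd' : 0 ≤ d - 1 := sub_nonneg.2 hd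
  induction A generalizing i with
  | zero => simpa using hK i le_rfl
  | succ A ih =>
    have h_lower : |Δ_[1] ^[A] (fun k ↦ Δ_[1] (fun k ↦ (halfChoose (b + k) i : ℝ)) k * d ^ k) 0| ≤
        K * (4 * w) ^ i / w * (d - 1 + d / w) ^ A := by
      cases i with
      | zero =>
        rw [halfChoose.fwdDiff_zero_right]
        simp only [Pi.zero_apply, zero_mul, fwdDiff_iter_eq_sum_shift, smul_zero,
          Finset.sum_const_zero, abs_zero]
        positivity
      | succ i =>
        simp only [halfChoose.fwdDiff_succ_right, Pi.smul_apply, smul_mul_assoc]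
        rw [← Pi.smul_def, fwdDiff_iter_const_smul, Pi.smul_apply, smul_eq_mul, abs_mul,
          Nat.abs_ofNat]
        refine (mul_le_mul_of_nonneg_left (ih fun j hj ↦ hK j (by omega)) zero_le_four).trans_eq ?_
        rw [pow_succ (4 * w)]
        field_simp
    rw [iterate_fwdDiff_mul_pow_succ, Pi.add_apply, Pi.smul_apply, Pi.smul_apply, smul_eq_mul,
      smul_eq_mul]
    refine (abs_add_le _ _).trans ?_
    rw [abs_mul, abs_mul, abs_of_nonneg hd', abs_of_nonneg (by linarith : 0 ≤ d)]
    calc (d - 1) * |Δ_[1] ^[A] (fun k ↦ (halfChoose (b + k) i : ℝ) * d ^ k) 0| +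
          d * |Δ_[1] ^[A] (fun k ↦ Δ_[1] (fun k ↦ (halfChoose (b + k) i : ℝ)) k * d ^ k) 0|
        ≤ (d - 1) * (K * (4 * w) ^ i * (d - 1 + d / w) ^ A) +
          d * (K * (4 * w) ^ i / w * (d - 1 + d / w) ^ A) := by
          gcongr
          exact ih hK
      _ = K * (4 * w) ^ i * (d - 1 + d / w) ^ (A + 1) := by ring

lemma choose_mul_pow_le {R : Type*} [CommSemiring R] [PartialOrder R] [IsOrderedRing R] {x : R}
    (hx : 0 ≤ x) {n k : ℕ} (hk : k ≤ n) : n.choose k * x ^ k ≤ (x + 1) ^ n := by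
  rw [add_pow]
  refine le_trans (by simp [mul_comm]) <| Finset.single_le_sum
    (f := fun k ↦ x ^ k * 1 ^ (n - k) * (n.choose k : R)) (fun j _ ↦
      mul_nonneg (mul_nonneg (pow_nonneg hx j) (by simp)) (Nat.cast_nonneg _))
    (Finset.mem_range_succ_iff.2 hk)

lemma abs_differenceForm_pow_le {d w : ℝ} (hd : 1 ≤ d) (hw : 0 < w) (A C : ℕ) :
    |differenceForm A C fun k ↦ d ^ k| ≤ 4 ^ C * ((1 + w) ^ C * (d - 1 + d / w) ^ A) := by
  have hK (j : ℕ) (hj : j ≤ C) : |(halfChoose C j : ℝ)| ≤ (w⁻¹ + 1) ^ C * (4 * w) ^ j := by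
    obtain ⟨h_nonneg, h_le⟩ := halfChoose.nonneg_and_le hj
    rw [abs_of_nonneg (by exact_mod_cast h_nonneg)]
    calc (halfChoose C j : ℝ) ≤ 4 ^ j * C.choose j := by exact_mod_cast h_le
      _ = C.choose j * w⁻¹ ^ j * (4 * w) ^ j := by
        rw [mul_assoc, ← mul_pow, inv_mul_eq_div, mul_div_cancel_right₀ _ hw.ne', mul_comm]
      _ ≤ (w⁻¹ + 1) ^ C * (4 * w) ^ j := by
        gcongr
        exact choose_mul_pow_le (by positivity) hj
  refine (abs_iterate_fwdDiff_halfChoose_mul_pow_le hd hw hK A).trans_eq ?_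
  rw [← mul_assoc, ← mul_pow, ← mul_pow]
  congr 2
  field_simp

/-! ### Estimates for `d = 15` -/

lemma exp_div_le {a b : ℕ} {y : ℝ} (hb : b ≠ 0) (hy : 0 ≤ y) (h : 2.7182818286 ^ a ≤ y ^ b) :
    Real.exp (a / b) ≤ y := by
  rw [← pow_le_pow_iff_left₀ (Real.exp_pos _).le hy hb, ← Real.exp_nat_mul,
    mul_div_cancel₀ _ (Nat.cast_ne_zero.2 hb), ← Real.exp_one_pow]
  exact (pow_le_pow_left₀ (Real.exp_pos 1).le Real.exp_one_lt_d9.le a).trans h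

lemma le_exp_div {a b : ℕ} {y : ℝ} (hb : b ≠ 0) (hy : 0 ≤ y) (h : y ^ b ≤ 2.7182818283 ^ a) :
    y ≤ Real.exp (a / b) := by
  rw [← pow_le_pow_iff_left₀ hy (Real.exp_pos _).le hb, ← Real.exp_nat_mul,
    mul_div_cancel₀ _ (Nat.cast_ne_zero.2 hb), ← Real.exp_one_pow]
  exact h.trans (pow_le_pow_left₀ (by norm_num) Real.exp_one_gt_d9.le a)

/-- The growth factor of the integrals `formIntegral d (A * n) (C * n)`: their integrand is
`formBase d A C (x ^ 2) ^ n / (d - x ^ 2)`. -/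
noncomputable def formBase (d : ℝ) (A C : ℕ) (t : ℝ) : ℝ := t ^ C * (1 - t) ^ A / (d - t) ^ C

section FormBase

variable {d : ℝ} {A C : ℕ}

lemma formBase_sq_nonneg (hd : 1 ≤ d) {x : ℝ} (hx : x ^ 2 ≤ 1) : 0 ≤ formBase d A C (x ^ 2) :=
  div_nonneg (mul_nonneg (by positivity) (pow_nonneg (sub_nonneg.2 hx) A))
    (pow_nonneg (sub_nonneg.2 (hx.trans hd)) C)

lemma formIntegral_eq_integral_formBase (A C n : ℕ) :
    formIntegral d (A * n) (C * n) =
      ∫ x in (-1 : ℝ)..1, formBase d A C (x ^ 2) ^ n / (d - x ^ 2) := by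
  refine intervalIntegral.integral_congr fun x _ ↦ ?_
  simp only [formBase, div_pow, mul_pow, div_div, ← pow_mul, pow_succ]
  ring_nf

lemma continuousOn_formBase_pow_div (hd : 1 < d) (A C n : ℕ) :
    ContinuousOn (fun x : ℝ ↦ formBase d A C (x ^ 2) ^ n / (d - x ^ 2)) (Icc (-1) 1) := by
  have h_ne (x : ℝ) (hx : x ∈ Icc (-1) 1) : d - x ^ 2 ≠ 0 :=
    (sub_sq_pos hd (by rwa [uIcc_of_le (by norm_num)])).ne'
  exact ((ContinuousOn.div (by fun_prop) (by fun_prop)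
    fun x hx ↦ pow_ne_zero C (h_ne x hx)).pow n).div (by fun_prop) h_ne

lemma formIntegral_le (hd : 1 < d) {M : ℝ} (hM : ∀ t ∈ Icc 0 1, formBase d A C t ≤ M) (n : ℕ) :
    formIntegral d (A * n) (C * n) ≤ 2 * (M ^ n / (d - 1)) := by
  rw [formIntegral_eq_integral_formBase]
  calc ∫ x in (-1 : ℝ)..1, formBase d A C (x ^ 2) ^ n / (d - x ^ 2)
      ≤ ∫ _ in (-1 : ℝ)..1, M ^ n / (d - 1) := by
        refine intervalIntegral.integral_mono_on (by norm_num)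
          ((continuousOn_formBase_pow_div hd A C n).intervalIntegrable_of_Icc (by norm_num))
          intervalIntegrable_const fun x hx ↦ ?_
        have hx_sq : x ^ 2 ≤ 1 := sq_le_one_iff_abs_le_one _ |>.2 (abs_le.2 hx)
        have h_nonneg := formBase_sq_nonneg (A := A) (C := C) hd.le hx_sq
        have h_le := hM _ ⟨sq_nonneg x, hx_sq⟩
        have h_den : 0 < d - 1 := sub_pos.2 hd
        exact div_le_div₀ (pow_nonneg (h_nonneg.trans h_le) n) (by gcongr) h_den (by gcongr)
    _ = 2 * (M ^ n / (d - 1)) := by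
        rw [intervalIntegral.integral_const, smul_eq_mul]
        norm_num

lemma le_formIntegral (hd : 1 < d) {m u v : ℝ} (hu : 0 ≤ u) (huv : u ≤ v) (hv : v ≤ 1)
    (hm : 0 ≤ m) (h_le : ∀ t ∈ Icc (u ^ 2) (v ^ 2), m ≤ formBase d A C t) (n : ℕ) :
    (v - u) * (m ^ n / d) ≤ formIntegral d (A * n) (C * n) := by
  have h_cont := continuousOn_formBase_pow_div hd A C n
  rw [formIntegral_eq_integral_formBase]
  calc (v - u) * (m ^ n / d) = ∫ _ in u..v, m ^ n / d := by
        rw [intervalIntegral.integral_const, smul_eq_mul]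
    _ ≤ ∫ x in u..v, formBase d A C (x ^ 2) ^ n / (d - x ^ 2) := by
        refine intervalIntegral.integral_mono_on huv intervalIntegrable_const
          ((h_cont.mono (Icc_subset_Icc (by linarith) hv)).intervalIntegrable_of_Icc huv)
          fun x hx ↦ ?_
        have hx_nonneg : 0 ≤ x := hu.trans hx.1
        have hx_sq : x ^ 2 ≤ 1 := pow_le_one₀ hx_nonneg (hx.2.trans hv)
        have := formBase_sq_nonneg (A := A) (C := C) hd.le hx_sq
        have : m ≤ formBase d A C (x ^ 2) :=
          h_le _ ⟨pow_le_pow_left₀ hu hx.1 2, pow_le_pow_left₀ hx_nonneg hx.2 2⟩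
        have : 0 < d - x ^ 2 := by linarith
        have : d - x ^ 2 ≤ d := sub_le_self d (sq_nonneg x)
        gcongr
    _ ≤ ∫ x in (-1 : ℝ)..1, formBase d A C (x ^ 2) ^ n / (d - x ^ 2) := by
        refine intervalIntegral.integral_mono_interval (by linarith) huv hv ?_
          (h_cont.intervalIntegrable_of_Icc (by norm_num))
        filter_upwards [ae_restrict_mem measurableSet_Ioc] with x hx
        have hx_sq : x ^ 2 ≤ 1 := sq_le_one_iff_abs_le_one _ |>.2 (abs_le.2 ⟨hx.1.le, hx.2⟩)
        exact div_nonneg (pow_nonneg (formBase_sq_nonneg hd.le hx_sq) n) (by linarith)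

end FormBase

lemma le_mul_exp_div_sub_one {c : ℝ} (hc : 0 < c) (t : ℝ) : t ≤ c * Real.exp (t / c - 1) :=
  calc t = c * (t / c - 1 + 1) := by rw [sub_add_cancel, mul_div_cancel₀ _ hc.ne']
    _ ≤ c * Real.exp (t / c - 1) := by gcongr; exact Real.add_one_le_exp _

lemma mul_exp_le_fifteen_sub {t : ℝ} (h_nonneg : 0 ≤ t) (h_le : t ≤ 1) :
    15 * Real.exp (-(0.0691 * t)) ≤ 15 - t := by
  have h_exp := Real.quadratic_le_exp_of_nonneg (x := 0.0691 * t) (by positivity)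
  rw [Real.exp_neg, ← div_eq_mul_inv, div_le_iff₀ (Real.exp_pos _)]
  refine le_trans ?_ (mul_le_mul_of_nonneg_left h_exp (by linarith))
  nlinarith [mul_nonneg h_nonneg (sub_nonneg.2 h_le)]

set_option exponentiation.threshold 2000 in
/- The maximum is attained near `t = 23 / 49`, where the exponential bounds for `t` and `1 - t`
are tangent. -/
lemma formBase_fifteen_le {t : ℝ} (ht : t ∈ Icc 0 1) : formBase 15 7 6 t ≤ Real.exp (-25.02) := by
  obtain ⟨h_nonneg, h_le⟩ := ht
  have h_t := le_mul_exp_div_sub_one (c := 23 / 49) (by norm_num) t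
  have h_one_sub := le_mul_exp_div_sub_one (c := 26 / 49) (by norm_num) (1 - t)
  have h_den := mul_exp_le_fifteen_sub h_nonneg h_le
  have : 0 ≤ 1 - t := by linarith
  have h_const : Real.exp (1261 / 50) ≤ 15 ^ 6 / ((23 / 49) ^ 6 * (26 / 49) ^ 7) := by
    exact_mod_cast exp_div_le (a := 1261) (b := 50) (by norm_num) (by positivity) (by norm_num)
  calc formBase 15 7 6 t
      ≤ (23 / 49 * Real.exp (t / (23 / 49) - 1)) ^ 6 *
          (26 / 49 * Real.exp ((1 - t) / (26 / 49) - 1)) ^ 7 /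
            (15 * Real.exp (-(0.0691 * t))) ^ 6 := by
        unfold formBase
        gcongr
    _ = Real.exp ((6 : ℕ) * (t / (23 / 49) - 1) + (7 : ℕ) * ((1 - t) / (26 / 49) - 1) +
          (6 : ℕ) * (0.0691 * t)) / (15 ^ 6 / ((23 / 49) ^ 6 * (26 / 49) ^ 7)) := by
        rw [Real.exp_add, Real.exp_add, Real.exp_nat_mul, Real.exp_nat_mul, Real.exp_nat_mul,
          Real.exp_neg]
        field_simp
    _ ≤ Real.exp 0.2 / Real.exp (1261 / 50) := by
        gcongr
        push_cast
        linarith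
    _ = Real.exp (-25.02) := by
        rw [← Real.exp_sub]
        norm_num

set_option exponentiation.threshold 2000 in
lemma le_formBase_fifteen {t : ℝ} (ht : t ∈ Icc (0.685 ^ 2) (0.6853 ^ 2)) :
    Real.exp (-25.04) ≤ formBase 15 7 6 t := by
  obtain ⟨h_ge, h_le⟩ := ht
  have h_const : (15 - 0.685 ^ 2) ^ 6 / ((0.685 ^ 2) ^ 6 * (1 - 0.6853 ^ 2) ^ 7) ≤
      Real.exp (626 / 25) := by
    exact_mod_cast le_exp_div (a := 626) (b := 25) (by norm_num) (by norm_num) (by norm_num)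
  have : (0 : ℝ) ≤ t := le_trans (by norm_num) h_ge
  have h_one_sub : 0 ≤ 1 - t := sub_nonneg.2 (h_le.trans (by norm_num))
  have h_den : 0 < 15 - t := by linarith
  calc Real.exp (-25.04) = (Real.exp (626 / 25))⁻¹ := by
        rw [← Real.exp_neg]
        norm_num
    _ ≤ (0.685 ^ 2) ^ 6 * (1 - 0.6853 ^ 2) ^ 7 / (15 - 0.685 ^ 2) ^ 6 :=
        (inv_anti₀ (by norm_num) h_const).trans_eq (inv_div _ _)
    _ ≤ formBase 15 7 6 t := by
        unfold formBase
        gcongr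

set_option exponentiation.threshold 2000 in
lemma abs_differenceForm_fifteen_le (n : ℕ) :
    |differenceForm (7 * n) (6 * n) fun k ↦ (15 : ℝ) ^ k| ≤
      4 ^ (6 * n) * Real.exp (27.7 * n) := by
  have h_const : (1 + 5 / 4 : ℝ) ^ 6 * (15 - 1 + 15 / (5 / 4)) ^ 7 ≤ Real.exp (277 / 10) := by
    exact_mod_cast le_exp_div (a := 277) (b := 10) (by norm_num) (by norm_num) (by norm_num)
  refine (abs_differenceForm_pow_le (w := 5 / 4) (by norm_num) (by norm_num) _ _).trans ?_
  rw [pow_mul (1 + 5 / 4 : ℝ), pow_mul _ 7, ← mul_pow, mul_comm 27.7, Real.exp_nat_mul]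
  gcongr
  exact h_const.trans_eq (by norm_num)

/-! ### Irrationality measures -/

/-- `c` bounds the irrationality measure of `α` from above. -/
def IrrationalityMeasureLE (α c : ℝ) : Prop :=
  ∀ κ : ℝ, κ > c →
    {pq : ℤ × ℕ+ | |α - (pq.1 : ℝ) / ((pq.2 : ℕ) : ℝ)| < ((pq.2 : ℕ) : ℝ) ^ (-κ)}.Finite

lemma IrrationalityMeasureLE.mono {α c c' : ℝ} (h : IrrationalityMeasureLE α c) (hc : c ≤ c') :
    IrrationalityMeasureLE α c' :=
  fun κ hκ ↦ h κ (hc.trans_lt hκ)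

lemma IrrationalityMeasureLE.of_eventually_le {α c : ℝ} (hc : 0 ≤ c)
    (h : ∀ κ > c, ∀ᶠ q : ℕ in atTop, ∀ p : ℤ, (q : ℝ) ^ (-κ) ≤ |α - p / q|) :
    IrrationalityMeasureLE α c := by
  intro κ hκ
  obtain ⟨Q, hQ⟩ := eventually_atTop.1 (h κ hκ)
  obtain ⟨M, hM⟩ := exists_nat_ge ((1 + |α|) * Q)
  refine ((finite_Icc (-(M : ℤ)) M).prod (finite_Iic Q.succPNat)).subset ?_
  rintro ⟨p, q⟩ h_lt
  have hq_lt : (q : ℕ) < Q := lt_of_not_ge fun h_ge ↦ (hQ q h_ge p).not_gt h_lt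
  have hq_one : (1 : ℝ) ≤ (q : ℕ) := by exact_mod_cast q.pos
  have hq_pos : (0 : ℝ) < (q : ℕ) := by linarith
  have h_dist : |α - p / (q : ℕ)| ≤ 1 :=
    h_lt.le.trans (Real.rpow_le_one_of_one_le_of_nonpos hq_one (by linarith))
  have hp : |(p : ℝ)| ≤ M :=
    calc |(p : ℝ)| = |(p : ℝ) / (q : ℕ)| * (q : ℕ) := by
          rw [abs_div, abs_of_pos hq_pos, div_mul_cancel₀ _ hq_pos.ne']
      _ ≤ (1 + |α|) * Q := by
          have := abs_sub_abs_le_abs_sub ((p : ℝ) / (q : ℕ)) α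
          rw [abs_sub_comm] at this
          gcongr
          linarith
      _ ≤ M := hM
  refine ⟨abs_le.1 (by exact_mod_cast hp), ?_⟩
  rw [mem_Iic, ← PNat.coe_le_coe, Nat.succPNat_coe]
  exact hq_lt.le.trans Q.le_succ

/- Otherwise the integer `a * p + b * q` would be nonzero and smaller than `1` in absolute value. -/
lemma abs_linearForm_le {α : ℝ} {a b p : ℤ} {q : ℕ} (hq : q ≠ 0)
    (h : 2 * q * |a * α + b| ≤ 1) : |a * α + b| ≤ |(a : ℝ)| * |α - p / q| := by
  have hq_pos : (0 : ℝ) < q := by positivity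
  have h_eq : q * (a * α + b) = (a * p + b * q : ℤ) + q * (a * (α - p / q)) := by
    push_cast
    field_simp
    ring
  rw [← abs_mul]
  refine le_of_mul_le_mul_left ?_ hq_pos
  by_cases h_zero : a * p + b * q = 0
  · rw [h_zero, Int.cast_zero, zero_add] at h_eq
    rw [mul_left_cancel₀ hq_pos.ne' h_eq]
  · have h_one : (1 : ℝ) ≤ |((a * p + b * q : ℤ) : ℝ)| := by
      exact_mod_cast Int.one_le_abs h_zero
    have h_tri := abs_sub (q * (a * α + b)) (q * (a * (α - p / q)))
    rw [sub_eq_iff_eq_add.2 h_eq, abs_mul, abs_mul, abs_of_pos hq_pos] at h_tri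
    linarith

lemma le_exp_mul_natCeil_log_div {x ρ : ℝ} (hx : 0 < x) (hρ : 0 < ρ) :
    x ≤ Real.exp (ρ * ⌈Real.log x / ρ⌉₊) := by
  rw [← Real.log_le_iff_le_exp hx, ← div_le_iff₀' hρ]
  exact Nat.le_ceil _

lemma exp_mul_natCeil_log_div_le {x ρ : ℝ} (hx : 1 ≤ x) (hρ : 0 < ρ) :
    Real.exp (ρ * ⌈Real.log x / ρ⌉₊) ≤ Real.exp ρ * x := by
  have h_ceil := Nat.ceil_lt_add_one (div_nonneg (Real.log_nonneg hx) hρ.le)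
  nth_rw 2 [← Real.exp_log (one_pos.trans_le hx)]
  rw [← Real.exp_add, Real.exp_le_exp]
  calc ρ * ⌈Real.log x / ρ⌉₊ ≤ ρ * (Real.log x / ρ + 1) := by gcongr
    _ = ρ + Real.log x := by field_simp; ring

theorem IrrationalityMeasureLE.of_linearForms {α C ρ σ : ℝ} (hC : 0 < C) (hρ : 0 < ρ) (hσ : 0 ≤ σ)
    (h : ∀ᶠ n : ℕ in atTop, ∃ a b : ℤ, 0 < |a * α + b| ∧
      |a * α + b| ≤ C * Real.exp (-(ρ * n)) ∧ |(a : ℝ)| ≤ C * Real.exp (σ * n) * |a * α + b|) :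
    IrrationalityMeasureLE α (σ / ρ) := by
  refine .of_eventually_le (by positivity) fun κ hκ ↦ ?_
  have h_cast := tendsto_natCast_atTop_atTop (R := ℝ)
  have h_mul : Tendsto (fun q : ℕ ↦ 2 * C * q) atTop atTop :=
    h_cast.const_mul_atTop (by positivity)
  have h_ceil : Tendsto (fun q : ℕ ↦ ⌈Real.log (2 * C * q) / ρ⌉₊) atTop atTop :=
    tendsto_nat_ceil_atTop.comp ((Real.tendsto_log_atTop.comp h_mul).atTop_div_const hρ)
  have h_power : Tendsto (fun q : ℕ ↦ (q : ℝ) ^ (κ - σ / ρ)) atTop atTop :=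
    (tendsto_rpow_atTop (sub_pos.2 hκ)).comp h_cast
  filter_upwards [h_ceil.eventually h, h_mul.eventually_ge_atTop 1,
    h_power.eventually_ge_atTop (C * (Real.exp ρ * (2 * C)) ^ (σ / ρ)), eventually_ne_atTop 0]
    with q ⟨a, b, h_pos, h_le, h_ratio⟩ hq_one hq_power hq p
  set n := ⌈Real.log (2 * C * q) / ρ⌉₊
  have hq_pos : (0 : ℝ) < q := by positivity
  have h_small : 2 * q * |a * α + b| ≤ 1 := by
    calc 2 * q * |a * α + b| ≤ 2 * q * (C * Real.exp (-(ρ * n))) := by gcongr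
      _ = 2 * C * q / Real.exp (ρ * n) := by rw [Real.exp_neg]; ring
      _ ≤ 1 := (div_le_one (Real.exp_pos _)).2 (le_exp_mul_natCeil_log_div (by positivity) hρ)
  have h_growth : C * Real.exp (σ * n) ≤ (q : ℝ) ^ κ := by
    calc C * Real.exp (σ * n) = C * Real.exp (ρ * n) ^ (σ / ρ) := by
          rw [← Real.exp_mul]; field_simp
      _ ≤ C * (Real.exp ρ * (2 * C) * q) ^ (σ / ρ) := by
          gcongr
          exact (exp_mul_natCeil_log_div_le hq_one hρ).trans_eq (by ring)
      _ = C * (Real.exp ρ * (2 * C)) ^ (σ / ρ) * (q : ℝ) ^ (σ / ρ) := by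
          rw [Real.mul_rpow (by positivity) hq_pos.le, mul_assoc]
      _ ≤ (q : ℝ) ^ (κ - σ / ρ) * (q : ℝ) ^ (σ / ρ) := by gcongr
      _ = (q : ℝ) ^ κ := by rw [← Real.rpow_add hq_pos, sub_add_cancel]
  rw [Real.rpow_neg hq_pos.le, inv_le_iff_one_le_mul₀' (by positivity)]
  refine le_of_mul_le_mul_right ?_ h_pos
  calc 1 * |a * α + b| ≤ |(a : ℝ)| * |α - p / q| := by
        rw [one_mul]; exact abs_linearForm_le hq h_small
    _ ≤ (q : ℝ) ^ κ * |a * α + b| * |α - p / q| := by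
        gcongr
        exact h_ratio.trans (by gcongr)
    _ = (q : ℝ) ^ κ * |α - p / q| * |a * α + b| := by ring

lemma formIntegral_fifteen_le (n : ℕ) :
    formIntegral 15 (7 * n) (6 * n) ≤ Real.exp (-(25.02 * n)) := by
  have h := formIntegral_le (d := 15) (by norm_num) (fun _ ↦ formBase_fifteen_le) n
  rw [← Real.exp_nat_mul, mul_comm (n : ℝ), neg_mul] at h
  linarith [Real.exp_pos (-(25.02 * n))]

lemma le_formIntegral_fifteen (n : ℕ) :
    0.00002 * Real.exp (-(25.04 * n)) ≤ formIntegral 15 (7 * n) (6 * n) := by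
  have h := le_formIntegral (d := 15) (u := 0.685) (v := 0.6853) (by norm_num) (by norm_num)
    (by norm_num) (by norm_num) (Real.exp_pos _).le (fun _ ↦ le_formBase_fifteen) n
  rw [← Real.exp_nat_mul, mul_comm (n : ℝ), neg_mul] at h
  linarith

lemma exists_linearForm_fifteen {n : ℕ}
    (h_scale : formScale (7 * n) (6 * n) ≤ Real.exp (15.33 * n)) :
    ∃ a b : ℤ, 0 < |a * sqrtMulLog 15 + b| ∧
      |a * sqrtMulLog 15 + b| ≤ 4000 * Real.exp (-(9.69 * n)) ∧
      |(a : ℝ)| ≤ 4000 * Real.exp (52.74 * n) * |a * sqrtMulLog 15 + b| := by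
  have h_lower := le_formIntegral_fifteen n
  have h_pos : 0 < formIntegral 15 (7 * n) (6 * n) := lt_of_lt_of_le (by positivity) h_lower
  have h_scale_pos := formScale_pos (7 * n) (6 * n)
  obtain ⟨a, b, h_form, h_coeff⟩ := exists_linearForm (d := 15) (by norm_num) (by decide)
    (show 6 * n ≤ 7 * n by omega)
  push_cast at h_form h_coeff
  rw [abs_of_pos h_pos] at h_form
  refine ⟨a, b, ?_, ?_, ?_⟩ <;> rw [h_form]
  · positivity
  · calc 15 * (formScale (7 * n) (6 * n) * formIntegral 15 (7 * n) (6 * n))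
        ≤ 15 * (Real.exp (15.33 * n) * Real.exp (-(25.02 * n))) := by
          gcongr
          exact formIntegral_fifteen_le n
      _ = 15 * Real.exp (-(9.69 * n)) := by rw [← Real.exp_add]; ring_nf
      _ ≤ 4000 * Real.exp (-(9.69 * n)) := by gcongr; norm_num
  · refine le_of_mul_le_mul_left ?_ (pow_pos four_pos (6 * n))
    calc 4 ^ (6 * n) * |(a : ℝ)|
        ≤ formScale (7 * n) (6 * n) * (4 ^ (6 * n) * Real.exp (27.7 * n)) := by
          rw [h_coeff]
          gcongr
          exact abs_differenceForm_fifteen_le n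
      _ ≤ formScale (7 * n) (6 * n) * (4 ^ (6 * n) * (1.2 * Real.exp (27.7 * n))) := by
          gcongr
          linarith [Real.exp_pos (27.7 * n)]
      _ = 4 ^ (6 * n) * (4000 * Real.exp (52.74 * n) *
            (15 * (formScale (7 * n) (6 * n) * (0.00002 * Real.exp (-(25.04 * n)))))) := by
          rw [show 27.7 * (n : ℝ) = 52.74 * n + -(25.04 * n) by ring, Real.exp_add]
          ring
      _ ≤ 4 ^ (6 * n) * (4000 * Real.exp (52.74 * n) *
            (15 * (formScale (7 * n) (6 * n) * formIntegral 15 (7 * n) (6 * n)))) := by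
          gcongr

theorem irrationality_measure_alpha_3_general :
    IrrationalityMeasureLE (sqrtMulLog 15) 5.443 := by
  have h := IrrationalityMeasureLE.of_linearForms (C := 4000) (ρ := 9.69) (σ := 52.74)
    (by norm_num) (by norm_num) (by norm_num)
    (eventually_formScale_le.mono fun _ ↦ exists_linearForm_fifteen)
  exact h.mono (by norm_num)

theorem irrationality_measure_alpha_3 :
    ∀ κ : ℝ, κ > 5.45249 →
      {pq : ℤ × ℕ+ |
        |Real.sqrt 15 * Real.log ((Real.sqrt 15 - 1) / (Real.sqrt 15 + 1)) -
            (pq.1 : ℝ) / ((pq.2 : ℕ) : ℝ)| <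
          ((pq.2 : ℕ) : ℝ) ^ (-κ)}.Finite :=
  irrationality_measure_alpha_3_general.mono (by norm_num)
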